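/- Let r ≥ 4 and let p > 3 be prime, and let V be a quasi-Hermitian variety of PG(r,p^4) whose characteristic vector v^V belongs to C_p. If π is a plane of PG(r,p^4) that is not contained in V and no line of π meets π ∩ V in exactly p^4 - p + 1 points, then π ∩ V is either a classical unital of π, or the union of i distinct lines of π all passing through a common point, for some i with 1 ≤ i ≤ p^2 + 1. -/

import Mathlib

/-!
Common framework: `ProjPoint F n` is the set of points of the projective space
PG(n-1, |F|) (so PG(r, q²) corresponds to `n = r + 1` and `Fintype.card F = q ^ 2`).
Projective subspaces of projective dimension `k` are the submodules of `Fin n → F`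
of `finrank` equal to `k + 1`; lines have finrank 2, planes finrank 3 and
hyperplanes finrank `n - 1 = r`.
-/

open Module Matrix

/-- The points of the projective space PG(n-1, |F|): one-dimensional subspaces
of `F^n`. -/
def ProjPoint (F : Type) [Field F] (n : ℕ) : Type :=
  {W : Submodule F (Fin n → F) // finrank F W = 1}

/-- The set of projective points lying in a given subspace `W`. -/
def pointsIn (F : Type) [Field F] (n : ℕ) (W : Submodule F (Fin n → F)) :
    Set (ProjPoint F n) :=
  {P | P.1 ≤ W}

/-- The number of points of `V` lying in the subspace `W`. -/
noncomputable def secant (F : Type) [Field F] (n : ℕ) (V : Set (ProjPoint F n))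
    (W : Submodule F (Fin n → F)) : ℕ :=
  (V ∩ pointsIn F n W).ncard

/-- The characteristic vector of a set of projective points, with values in `F_p`. -/
noncomputable def charVec (F : Type) [Field F] (p n : ℕ) (S : Set (ProjPoint F n)) :
    ProjPoint F n → ZMod p :=
  Set.indicator S 1

/-- `C_p`: the `F_p`-code spanned by the characteristic vectors of hyperplanes. -/
def hypCode (F : Type) [Field F] (p n : ℕ) :
    Submodule (ZMod p) (ProjPoint F n → ZMod p) :=
  Submodule.span (ZMod p)
    {v | ∃ H : Submodule F (Fin n → F), finrank F H = n - 1 ∧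
      v = charVec F p n (pointsIn F n H)}

/-- A quasi-Hermitian variety of PG(r, q²): it has the size of a non-singular
Hermitian variety and the same two intersection numbers with hyperplanes.
(All identities are stated multiplied through by `q² - 1`.) -/
def IsQuasiHermitian (F : Type) [Field F] (q r : ℕ)
    (V : Set (ProjPoint F (r + 1))) : Prop :=
  (V.ncard : ℤ) * ((q : ℤ) ^ 2 - 1)
      = ((q : ℤ) ^ (r + 1) + (-1) ^ r) * ((q : ℤ) ^ r - (-1) ^ r) ∧
  ∀ H : Submodule F (Fin (r + 1) → F), finrank F H = r →
    ((secant F (r + 1) V H : ℤ) * ((q : ℤ) ^ 2 - 1)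
        = ((q : ℤ) ^ r + (-1) ^ (r - 1)) * ((q : ℤ) ^ (r - 1) - (-1) ^ (r - 1)) ∨
     (secant F (r + 1) V H : ℤ) * ((q : ℤ) ^ 2 - 1)
        = ((q : ℤ) ^ 2 - 1)
          + (q : ℤ) ^ 2 * (((q : ℤ) ^ (r - 1) + (-1) ^ r) * ((q : ℤ) ^ (r - 2) - (-1) ^ r)))

/-- The zero set, in PG(n-1,|F|), of the Hermitian form `x ↦ xᵀ A x^(q)`. -/
def hermSet (F : Type) [Field F] (q n : ℕ) (A : Matrix (Fin n) (Fin n) F) :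
    Set (ProjPoint F n) :=
  {P | ∀ x ∈ P.1, ∑ i, ∑ j, x i * A i j * (x j) ^ q = 0}

/-- A non-singular Hermitian variety of PG(n-1, q²). -/
def IsNonsingHermitian (F : Type) [Field F] (q n : ℕ)
    (V : Set (ProjPoint F n)) : Prop :=
  ∃ A : Matrix (Fin n) (Fin n) F, IsUnit A.det ∧
    Aᵀ = A.map (fun a => a ^ q) ∧ V = hermSet F q n A

/-- A singular Hermitian variety of PG(n-1, q²) whose singular space (the radical
of the Hermitian form) has projective dimension `d`. -/
def IsSingularHermitian (F : Type) [Field F] (q n d : ℕ)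
    (S : Set (ProjPoint F n)) : Prop :=
  ∃ A : Matrix (Fin n) (Fin n) F,
    Aᵀ = A.map (fun a => a ^ q) ∧
    finrank F (LinearMap.ker (Matrix.toLin' Aᵀ)) = d + 1 ∧
    S = hermSet F q n A

/-- A `d`-singular quasi-Hermitian variety of PG(r, q²). -/
def IsSingularQuasiHermitian (F : Type) [Field F] (q r d : ℕ)
    (S : Set (ProjPoint F (r + 1))) : Prop :=
  ∃ S₀ : Set (ProjPoint F (r + 1)), IsSingularHermitian F q (r + 1) d S₀ ∧
    S.ncard = S₀.ncard ∧
    ∀ H : Submodule F (Fin (r + 1) → F), finrank F H = r →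
      ∃ H₀ : Submodule F (Fin (r + 1) → F), finrank F H₀ = r ∧
        secant F (r + 1) S H = secant F (r + 1) S₀ H₀

/-- `U` is a classical unital (Hermitian curve) of the plane `π` of PG(n-1, q²):
in some coordinatization `e` of `π`, it is the zero set of a non-degenerate
Hermitian form on `F³`. -/
def IsClassicalUnital (F : Type) [Field F] (q n : ℕ)
    (π : Submodule F (Fin n → F)) (U : Set (ProjPoint F n)) : Prop :=
  ∃ e : (Fin 3 → F) →ₗ[F] (Fin n → F), LinearMap.ker e = ⊥ ∧ LinearMap.range e = π ∧
    ∃ A : Matrix (Fin 3) (Fin 3) F, IsUnit A.det ∧ Aᵀ = A.map (fun a => a ^ q) ∧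
      U = {P | ∃ y : Fin 3 → F, y ≠ 0 ∧ P.1 = Submodule.span F {e y} ∧
        ∑ i, ∑ j, y i * A i j * (y j) ^ q = 0}

/-!
For a word `c` of the code of a plane of order `n`, the `k`-th power moments of `c` along parallel
lines depend polynomially, with degree at most `k`, on the line. A Hankel determinant of these
moments then shows that if a line meets the support of `c` in `t < n / 2` points, then the support
has at least `t (n + 2 - t)` points.

Every line meets `V` in `≡ 1` mod `p` points. Averaging over the planes through a line yields one
with a small section of `V`, and there the weight bound, applied to the section and to the section
minus its long lines, leaves only the sizes `≤ p² + 1`, `p⁴ - p + 1` and `p⁴ + 1` for the line. In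
`π` the middle one is excluded. If `π` has lines inside `V`, the section minus these lines is a word
too light to be nonzero. Hence a point of `π` lies on `≡ 1` mod `p` of these lines if it belongs to
`V` and on `≡ 0` if not, and counting makes the lines concurrent.

Otherwise `π ∩ V` is a unital. Its `k`-th moments along a direction `e ∉ V` are forms of degree
`k` for `k ≤ p² + 1`: the one of degree `1` shows that the feet of the tangents through `e` are
collinear, the one of degree `p² + 1` is Hermitian on the line of the feet, and together they give
the Hermitian equation of the section.
-/

namespace QuasiHermitian

open Configuration Finset ProjectivePlane
open scoped Classical LinearAlgebra.Projectivization

/-! ### Incidence counts in projective planes -/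

section Incidence

variable {P L : Type*} [Membership P L]

/-- The number of points of `S` on the line `l`. -/
noncomputable def lineCard (S : Finset P) (l : L) : ℕ := #{R ∈ S | R ∈ l}

/-- The number of lines of `A` through the point `R`; this is `lineCard` in the dual plane. -/
noncomputable def degree (A : Finset L) (R : P) : ℕ := #{l ∈ A | R ∈ l}

lemma sum_degree (A : Finset L) (S : Finset P) :
    ∑ R ∈ S, degree A R = ∑ l ∈ A, lineCard S l := by
  simp only [degree, lineCard, card_filter]
  exact sum_comm

lemma sum_sum_filter_mem (S : Finset P) (A : Finset L) (f : L → ℕ) :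
    ∑ R ∈ S, ∑ l ∈ A with R ∈ l, f l = ∑ l ∈ A, lineCard S l * f l := by
  simp_rw [sum_filter]
  rw [sum_comm]
  refine sum_congr rfl fun l _ => ?_
  rw [← sum_filter, sum_const, lineCard, smul_eq_mul]

lemma lineCard_eq_sum [Fintype P] (S : Finset P) (l : L) :
    lineCard S l = ∑ R : P with R ∈ l, if R ∈ S then 1 else 0 := by
  rw [lineCard, ← card_filter, filter_filter]
  congr 1
  ext R
  simp [and_comm]

lemma eq_of_lineCard_eq_one {S : Finset P} {l : L} (hl : lineCard S l = 1) {R T : P}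
    (hR : R ∈ S) (hRl : R ∈ l) (hT : T ∈ S) (hTl : T ∈ l) : R = T :=
  card_le_one.1 hl.le R (mem_filter.2 ⟨hR, hRl⟩) T (mem_filter.2 ⟨hT, hTl⟩)

lemma one_lt_degree {A : Finset L} {l m : L} (hl : l ∈ A) (hm : m ∈ A) (hlm : l ≠ m) {R : P}
    (hRl : R ∈ l) (hRm : R ∈ m) : 1 < degree A R :=
  one_lt_card.2 ⟨l, mem_filter.2 ⟨hl, hRl⟩, m, mem_filter.2 ⟨hm, hRm⟩, hlm⟩

lemma degree_pos {A : Finset L} {l : L} (hl : l ∈ A) {R : P} (hR : R ∈ l) : 0 < degree A R :=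
  card_pos.2 ⟨l, mem_filter.2 ⟨hl, hR⟩⟩

variable [ProjectivePlane P L]

lemma card_lines_through_pair [Fintype L] {R T : P} (h : R ≠ T) :
    #{l : L | R ∈ l ∧ T ∈ l} = 1 := by
  obtain ⟨l, hl, hu⟩ := HasLines.existsUnique_line P L R T h
  refine card_eq_one.2 ⟨l, ?_⟩
  ext m
  simp only [mem_filter, mem_univ, true_and, mem_singleton]
  exact ⟨hu m, fun hm => hm ▸ hl⟩

lemma degree_le_card_filter [Fintype P] {A : Finset L} {k : ℕ}
    (hgap : ∀ T : P, 2 ≤ degree A T → k + 1 ≤ degree A T) {l : L} (hl : l ∈ A) {R : P}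
    (hR : R ∉ l) : degree A R ≤ #{T : P | T ∈ l ∧ k + 1 ≤ degree A T} := by
  have hmeet (m : L) : ∃ T : P, R ∈ m → T ∈ m ∧ T ∈ l := by
    by_cases hm : R ∈ m
    · have hml : m ≠ l := fun h => hR (h ▸ hm)
      obtain ⟨T, hT, -⟩ := HasPoints.existsUnique_point P L m l hml
      exact ⟨T, fun _ => hT⟩
    · exact ⟨R, fun h => absurd h hm⟩
  choose f hf using hmeet
  refine card_le_card_of_injOn f (fun m hm => ?_) (fun m hm m' hm' heq => ?_)
  · obtain ⟨hmA, hRm⟩ := mem_filter.1 (mem_coe.1 hm)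
    obtain ⟨hfm, hfl⟩ := hf m hRm
    have hml : m ≠ l := fun h => hR (h ▸ hRm)
    exact mem_coe.2 (mem_filter.2 ⟨mem_univ _, hfl, hgap _ (one_lt_degree hmA hl hml hfm hfl)⟩)
  · have hRm := (mem_filter.1 (mem_coe.1 hm)).2
    have hRm' := (mem_filter.1 (mem_coe.1 hm')).2
    have hne : f m ≠ R := fun h => hR (h ▸ (hf m hRm).2)
    exact (Nondegenerate.eq_or_eq (hf m hRm).1 hRm (heq ▸ (hf m' hRm').1) hRm').resolve_left hne

section

variable [Finite P] [Fintype L]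

lemma card_lines_through (R : P) : #{l : L | R ∈ l} = order P L + 1 := by
  rw [← lineCount_eq (L := L) R, lineCount, Nat.card_eq_fintype_card, Fintype.card_subtype]

lemma sum_lineCard_through (S : Finset P) (R : P) :
    ∑ l : L with R ∈ l, lineCard S l = #S + if R ∈ S then order P L else 0 := by
  have hdeg (T : P) : degree {l : L | R ∈ l} T = 1 + if T = R then order P L else 0 := by
    rw [degree, filter_filter]
    split_ifs with hT
    · simp only [hT, and_self, card_lines_through, add_comm]
    · exact card_lines_through_pair (Ne.symm hT)
  simp [← sum_degree, hdeg, sum_add_distrib]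

lemma sum_lineCard (S : Finset P) : ∑ l : L, lineCard S l = #S * (order P L + 1) := by
  have hdeg (R : P) : degree (univ : Finset L) R = order P L + 1 := card_lines_through R
  simp only [← sum_degree, hdeg, sum_const, smul_eq_mul]

lemma sum_lineCard_sq (S : Finset P) :
    ∑ l : L, lineCard S l * lineCard S l = #S * (#S + order P L) := by
  rw [← sum_sum_filter_mem, sum_congr rfl fun R hR => by rw [sum_lineCard_through, if_pos hR],
    sum_const, smul_eq_mul]

lemma sum_lineCard_defect {q : ℕ} (hord : order P L = q ^ 2) (S : Finset P) :
    ∑ l : L, ((q : ℤ) + 1 - lineCard S l) * (lineCard S l - 1)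
      = (q ^ 3 + 1 - #S) * (#S - (q ^ 2 + q + 1)) := by
  have h₁ : ∑ l : L, (lineCard S l : ℤ) = #S * (q ^ 2 + 1) := by
    exact_mod_cast hord ▸ sum_lineCard (L := L) S
  have h₂ : ∑ l : L, (lineCard S l : ℤ) * lineCard S l = #S * (#S + q ^ 2) := by
    exact_mod_cast hord ▸ sum_lineCard_sq (L := L) S
  have h₀ : ((Fintype.card L : ℕ) : ℤ) = (q ^ 2) ^ 2 + q ^ 2 + 1 := by
    exact_mod_cast hord ▸ card_lines P L
  have hexp : ∀ l : L, ((q : ℤ) + 1 - lineCard S l) * (lineCard S l - 1)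
      = (q + 2) * lineCard S l - lineCard S l * lineCard S l - (q + 1) := fun l => by ring
  rw [sum_congr rfl fun l _ => hexp l, sum_sub_distrib, sum_sub_distrib, ← mul_sum, h₁, h₂,
    sum_const, card_univ, nsmul_eq_mul, h₀]
  ring

end

section

variable [Fintype P] [Finite L]

lemma lineCard_univ (l : L) : lineCard (univ : Finset P) l = order P L + 1 := by
  rw [← pointCount_eq (P := P) l, pointCount, Nat.card_eq_fintype_card, Fintype.card_subtype,
    lineCard]

lemma lineCard_add_lineCard_compl (S : Finset P) (l : L) :
    lineCard S l + lineCard Sᶜ l = order P L + 1 := by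
  rw [← lineCard_univ l, lineCard, lineCard, lineCard, ← card_union_of_disjoint, ← filter_union,
    union_compl]
  exact disjoint_filter_filter disjoint_compl_right

lemma sum_degree_on (A : Finset L) (l : L) :
    ∑ R : P with R ∈ l, degree A R = #A + if l ∈ A then order P L else 0 := by
  rw [← Dual.order P L]
  exact sum_lineCard_through (P := Dual L) (L := Dual P) A l

lemma sum_univ_degree (A : Finset L) : ∑ R : P, degree A R = #A * (order P L + 1) := by
  rw [← Dual.order P L]
  exact sum_lineCard (P := Dual L) (L := Dual P) A

lemma sum_univ_degree_sq (A : Finset L) :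
    ∑ R : P, degree A R * degree A R = #A * (#A + order P L) := by
  rw [← Dual.order P L]
  exact sum_lineCard_sq (P := Dual L) (L := Dual P) A

lemma sum_degree_mul_pred (A : Finset L) :
    ∑ R : P, degree A R * (degree A R - 1) = #A * (#A - 1) := by
  have hpred (k : ℕ) : k * (k - 1) + k = k * k := by cases k <;> simp; ring
  have h : ∑ R : P, degree A R * (degree A R - 1) + ∑ R : P, degree A R
      = ∑ R : P, degree A R * degree A R := by
    rw [← sum_add_distrib, sum_congr rfl fun R _ => hpred _]
  rw [sum_univ_degree, sum_univ_degree_sq] at h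
  have := hpred #A
  linarith

lemma sum_degree_sub_one_on {A : Finset L} {l : L} (hl : l ∈ A) :
    ∑ R : P with R ∈ l, (degree A R - 1) + 1 = #A := by
  have h : ∑ R : P with R ∈ l, degree A R
      = ∑ R : P with R ∈ l, (degree A R - 1) + lineCard (univ : Finset P) l := by
    rw [lineCard, card_eq_sum_ones, ← sum_add_distrib]
    refine sum_congr rfl fun R hR => ?_
    have := degree_pos hl (mem_filter.1 hR).2
    omega
  rw [sum_degree_on, if_pos hl, lineCard_univ] at h
  omega

end

variable [Finite P] [Finite L]

lemma lineCard_le (S : Finset P) (l : L) : lineCard S l ≤ order P L + 1 := by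
  have := Fintype.ofFinite P
  rw [← lineCard_univ l]
  exact card_le_card (filter_subset_filter _ (subset_univ _))

lemma mem_of_lineCard_eq {S : Finset P} {l : L} (h : lineCard S l = order P L + 1) {R : P}
    (hR : R ∈ l) : R ∈ S := by
  have := Fintype.ofFinite P
  have hcompl : lineCard Sᶜ l = 0 := by
    have := lineCard_add_lineCard_compl S l
    omega
  by_contra hRS
  exact filter_eq_empty_iff.1 (card_eq_zero.1 hcompl) (mem_compl.2 hRS) hR

/-- Inclusion–exclusion: a point of degree `d` is counted `d ≤ 1 + d (d - 1) / 2` times. -/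
lemma two_mul_sum_lineCard_le (S : Finset P) (A : Finset L) :
    2 * ∑ l ∈ A, lineCard S l ≤ 2 * #S + #A * (#A - 1) := by
  have := Fintype.ofFinite P
  rw [← sum_degree, ← sum_degree_mul_pred (P := P), mul_sum, card_eq_sum_ones, mul_sum]
  refine le_trans (sum_le_sum fun R _ => ?_) (sum_add_distrib.le.trans
    (add_le_add_right (sum_le_sum_of_subset (subset_univ S)) _))
  obtain h | h | h : degree A R = 0 ∨ degree A R = 1 ∨ 2 ≤ degree A R := by omega
  · simp [h]
  · simp [h]
  · obtain ⟨d, hd⟩ := Nat.exists_eq_add_of_le h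
    rw [hd, show 2 + d - 1 = d + 1 by omega]
    nlinarith

lemma exists_common_point_of_degree_gap {A : Finset L} (hA : A.Nonempty) {k : ℕ}
    (hcard : #A ≤ k ^ 2 + k) (hgap : ∀ T : P, 2 ≤ degree A T → k + 1 ≤ degree A T) :
    ∃ R : P, ∀ l ∈ A, R ∈ l := by
  have := Fintype.ofFinite P
  obtain ⟨l₁, h₁⟩ := hA
  by_cases hone : ∀ m ∈ A, m = l₁
  · have hpos : 0 < lineCard (univ : Finset P) l₁ := by rw [lineCard_univ]; omega
    obtain ⟨R, hR⟩ := card_pos.1 hpos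
    exact ⟨R, fun m hm => hone m hm ▸ (mem_filter.1 hR).2⟩
  · push Not at hone
    obtain ⟨l₂, h₂, h₂₁⟩ := hone
    obtain ⟨R, ⟨hR₂, hR₁⟩, -⟩ := HasPoints.existsUnique_point P L l₂ l₁ h₂₁
    refine ⟨R, fun l hl => ?_⟩
    by_contra hRl
    -- If `R ∉ l`, then `l` has at least `k + 1` points of degree at least `k + 1`.
    have hmany := (hgap R (one_lt_degree h₂ h₁ h₂₁ hR₂ hR₁)).trans
      (degree_le_card_filter hgap hl hRl)
    have hlow := card_nsmul_le_sum {T : P | T ∈ l ∧ k + 1 ≤ degree A T} (degree A · - 1) k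
      fun T hT => by have := (mem_filter.1 hT).2.2; omega
    have hsum := sum_degree_sub_one_on (P := P) hl
    have hsub : ∑ T : P with T ∈ l ∧ k + 1 ≤ degree A T, (degree A T - 1)
        ≤ ∑ T : P with T ∈ l, (degree A T - 1) :=
      sum_le_sum_of_subset (monotone_filter_right _ fun T _ h => h.1)
    rw [smul_eq_mul] at hlow
    nlinarith

lemma card_le_of_long_lines {q : ℕ} {U : Finset P} {A : Finset L} (hq : 9 ≤ q)
    (hU : #U ≤ (q + 1) * (q ^ 2 + 1)) (hA : ∀ m ∈ A, q ^ 2 + 1 ≤ lineCard U m + q) :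
    #A ≤ q + 3 := by
  by_contra! hlt
  obtain ⟨B, hBA, hB⟩ := exists_subset_card_eq (show q + 4 ≤ #A by omega)
  have hincl := two_mul_sum_lineCard_le U B
  have hlow : #B * (q ^ 2 + 1) ≤ ∑ l ∈ B, lineCard U l + #B * q := by
    rw [← smul_eq_mul, ← smul_eq_mul, ← sum_const, ← sum_const, ← sum_add_distrib]
    exact sum_le_sum fun l hl => hA l (hBA hl)
  rw [hB] at hincl hlow
  rw [show q + 4 - 1 = q + 3 by omega] at hincl
  nlinarith

lemma card_le_of_lineCard_le {q : ℕ} {U : Finset P} (hord : order P L = q ^ 2) {R : P} (hR : R ∉ U)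
    (hle : ∀ l : L, R ∈ l → lineCard U l ≤ q + 1) : #U ≤ (q + 1) * (q ^ 2 + 1) := by
  have := Fintype.ofFinite L
  have hsum := sum_lineCard_through (L := L) U R
  rw [if_neg hR, add_zero] at hsum
  rw [← hsum, mul_comm, ← hord, ← card_lines_through (L := L) R, ← smul_eq_mul]
  exact sum_le_card_nsmul _ _ _ fun l hl => hle l (mem_filter.1 hl).2

end Incidence

/-! ### Small codewords of a plane -/

section Code

/-- The support of a function on a finite type, as a finset. -/
noncomputable def supp {ι M : Type*} [Fintype ι] [Zero M] (f : ι → M) : Finset ι := {i | f i ≠ 0}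

lemma mem_supp {ι M : Type*} [Fintype ι] [Zero M] {f : ι → M} {i : ι} : i ∈ supp f ↔ f i ≠ 0 := by
  simp [supp]

variable {P L : Type*} [Membership P L] {p : ℕ}

/-- The characteristic vector of the set `S` over `F_p`. -/
noncomputable def setVec (p : ℕ) (S : Set P) : P → ZMod p := S.indicator 1

/-- The vector of the set `U` minus the sum of the vectors of the lines in `A`. -/
noncomputable def rest (p : ℕ) (U : Finset P) (A : Finset L) : P → ZMod p :=
  setVec p (U : Set P) - ∑ l ∈ A, setVec p {R : P | R ∈ l}

lemma rest_apply (U : Finset P) (A : Finset L) (R : P) :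
    rest p U A R = (if R ∈ U then 1 else 0) - (degree A R : ZMod p) := by
  simp [rest, setVec, Set.indicator_apply, degree]

lemma degree_modEq_of_rest_eq_zero {U : Finset P} {A : Finset L}
    (hrest : rest p U A = 0) (R : P) :
    degree A R ≡ if R ∈ U then 1 else 0 [MOD p] := by
  have h := congrFun hrest R
  rw [rest_apply, Pi.zero_apply, sub_eq_zero] at h
  rw [← ZMod.natCast_eq_natCast_iff, ← h]
  split_ifs <;> simp

variable [Fintype P]

lemma supp_setVec [Fact p.Prime] (U : Finset P) : supp (setVec p (U : Set P)) = U := by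
  ext R
  simp [mem_supp, setVec]

lemma supp_rest_singleton [Fact p.Prime] (U : Finset P) (l : L) :
    supp (rest p U {l}) = ({R | ¬ (R ∈ U ↔ R ∈ l)} : Finset P) := by
  ext R
  by_cases hU : R ∈ U <;> by_cases hl : R ∈ l <;>
    simp [mem_supp, rest_apply, degree, filter_singleton, hU, hl]

lemma degree_ne_of_mem_supp_rest {U : Finset P} {A : Finset L} {R : P}
    (hR : R ∈ supp (rest p U A)) : degree A R ≠ if R ∈ U then 1 else 0 := by
  rw [mem_supp, rest_apply] at hR
  contrapose hR
  rw [hR]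
  split_ifs <;> simp

lemma lineCard_supp_rest_singleton_self [Fact p.Prime] (U : Finset P) (l : L) :
    lineCard (supp (rest p U {l})) l = lineCard Uᶜ l := by
  rw [supp_rest_singleton, lineCard, lineCard]
  congr 1
  ext R
  simp only [mem_filter, mem_univ, true_and, mem_compl]
  tauto

end Code

section Rest

variable {P L : Type*} [Membership P L] [ProjectivePlane P L]

lemma eq_of_mem_of_ne {l m : L} (hml : m ≠ l) {T : P} (hTm : T ∈ m) (hTl : T ∈ l) {R : P}
    (hRm : R ∈ m) (hRl : R ∈ l) : R = T :=
  (Nondegenerate.eq_or_eq hRm hTm hRl hTl).resolve_right hml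

variable [Fintype P] {p : ℕ} {U : Finset P} {A : Finset L}

lemma lineCard_supp_rest_singleton_of_notMem [Fact p.Prime] {l m : L} (hml : m ≠ l) {T : P}
    (hTm : T ∈ m) (hTl : T ∈ l) (hTU : T ∉ U) :
    lineCard (supp (rest p U {l})) m = lineCard U m + 1 := by
  have hnot : T ∉ ({R ∈ U | R ∈ m} : Finset P) := fun h => hTU (mem_filter.1 h).1
  rw [lineCard, lineCard, ← card_insert_of_notMem hnot, supp_rest_singleton]
  congr 1
  ext R
  have := @eq_of_mem_of_ne P L _ _ l m hml T hTm hTl R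
  simp only [mem_filter, mem_univ, true_and, mem_insert]
  grind

lemma lineCard_supp_rest_singleton_of_mem [Fact p.Prime] {l m : L} (hml : m ≠ l) {T : P}
    (hTm : T ∈ m) (hTl : T ∈ l) (hTU : T ∈ U) :
    lineCard (supp (rest p U {l})) m = lineCard U m - 1 := by
  have hmem : T ∈ ({R ∈ U | R ∈ m} : Finset P) := mem_filter.2 ⟨hTU, hTm⟩
  rw [lineCard, lineCard, ← card_erase_of_mem hmem, supp_rest_singleton]
  congr 1
  ext R
  have := @eq_of_mem_of_ne P L _ _ l m hml T hTm hTl R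
  simp only [mem_filter, mem_univ, true_and, mem_erase]
  grind

variable [Finite L]

lemma card_supp_rest_le (U : Finset P) (A : Finset L) :
    #(supp (rest p U A)) + ∑ l ∈ A, lineCard U l
      ≤ #U + #A * (#A - 1) + ∑ l ∈ A, lineCard Uᶜ l := by
  have hsum (S : Finset P) (f : P → ℕ) : ∑ R ∈ S, f R = ∑ R, if R ∈ S then f R else 0 := by
    rw [sum_ite_mem, univ_inter]
  rw [← sum_degree, ← sum_degree, ← sum_degree_mul_pred (P := P), card_eq_sum_ones,
    card_eq_sum_ones, hsum, hsum U, hsum U, hsum Uᶜ, ← sum_add_distrib, ← sum_add_distrib,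
    ← sum_add_distrib]
  refine sum_le_sum fun R _ => ?_
  have hne : R ∈ supp (rest p U A) → _ := degree_ne_of_mem_supp_rest
  obtain h | h | ⟨d, hd⟩ : degree A R = 0 ∨ degree A R = 1 ∨ ∃ d, degree A R = d + 2 := by
    obtain h | h | h : degree A R = 0 ∨ degree A R = 1 ∨ 2 ≤ degree A R := by omega
    exacts [.inl h, .inr (.inl h), .inr (.inr (Nat.exists_eq_add_of_le' h))]
  · by_cases hU : R ∈ U <;> simp_all; split_ifs <;> simp
  · by_cases hU : R ∈ U <;> simp_all; split_ifs <;> simp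
  · rw [hd, show d + 2 - 1 = d + 1 by omega]
    by_cases hU : R ∈ U <;> simp only [hU, mem_compl, not_true, not_false_iff, if_true, if_false]
      <;> split_ifs <;> nlinarith

lemma lineCard_supp_rest_le_of_notMem (U : Finset P) {m : L} (hm : m ∉ A) :
    lineCard (supp (rest p U A)) m ≤ lineCard U m + #A := by
  have hdeg : ∑ R : P with R ∈ m, degree A R = #A := by rw [sum_degree_on, if_neg hm, add_zero]
  rw [lineCard_eq_sum, lineCard_eq_sum U, ← hdeg, ← sum_add_distrib]
  refine sum_le_sum fun R _ => ?_
  have hne : R ∈ supp (rest p U A) → _ := degree_ne_of_mem_supp_rest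
  split_ifs with h₁ h₂ <;> grind

lemma lineCard_supp_rest_le_of_mem (U : Finset P) {m : L} (hm : m ∈ A) :
    lineCard (supp (rest p U A)) m + 1 ≤ lineCard Uᶜ m + #A := by
  have hdeg := sum_degree_sub_one_on (P := P) hm
  rw [lineCard_eq_sum, lineCard_eq_sum Uᶜ, ← hdeg, ← add_assoc, ← sum_add_distrib]
  refine add_le_add_left (sum_le_sum fun R hR => ?_) 1
  have hne : R ∈ supp (rest p U A) → _ := degree_ne_of_mem_supp_rest
  have hpos := degree_pos hm (mem_filter.1 hR).2
  simp only [mem_compl]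
  split_ifs with h₁ h₂ <;> grind

end Rest

section LineBounded

/-- A code of the plane that contains the lines and whose words `c` satisfy a weight bound in terms
of any line `l` that meets the support in less than half of the order `n`: with
`t = lineCard (supp c) l`, the weight is at least `t (n + 2 - t)`. -/
structure IsLineBounded {P : Type*} (L : Type*) [Membership P L] [ProjectivePlane P L] [Fintype P]
    {p : ℕ} (C : Submodule (ZMod p) (P → ZMod p)) : Prop where
  line_mem : ∀ l : L, setVec p {R : P | R ∈ l} ∈ C
  weight_bound : ∀ c ∈ C, ∀ l : L, 2 * lineCard (supp c) l < order P L →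
    lineCard (supp c) l * (order P L + 2)
      ≤ #(supp c) + lineCard (supp c) l * lineCard (supp c) l

variable {P L : Type*} [Membership P L] [ProjectivePlane P L] [Fintype P] {p q : ℕ}
  {C : Submodule (ZMod p) (P → ZMod p)} {U : Finset P} {A : Finset L}

/-- `t ↦ t (n + 2 - t)` is concave and symmetric about `n / 2 + 1`. -/
lemma mul_add_sq_le_mul_add_sq {a t n : ℕ} (hat : a ≤ t) (htn : t + a ≤ n + 2) :
    a * (n + 2) + t * t ≤ t * (n + 2) + a * a := by
  zify at *
  nlinarith [mul_nonneg (sub_nonneg.2 hat) (sub_nonneg.2 htn)]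

lemma IsLineBounded.rest_mem (hC : IsLineBounded L C) (hU : setVec p (U : Set P) ∈ C)
    (A : Finset L) : rest p U A ∈ C :=
  C.sub_mem hU (C.sum_mem fun l _ => hC.line_mem l)

variable [Finite L]

lemma IsLineBounded.exists_le_lineCard (hC : IsLineBounded L C) (hord : order P L = q ^ 2)
    {c : P → ZMod p} (hc : c ∈ C) {R : P} (hR : c R ≠ 0)
    (hshort : ∀ l : L, R ∈ l → 2 * lineCard (supp c) l < q ^ 2) :
    ∃ l : L, R ∈ l ∧ q + 1 ≤ lineCard (supp c) l := by
  have := Fintype.ofFinite L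
  have hne : ({l : L | R ∈ l} : Finset L).Nonempty := by
    rw [← card_pos, card_lines_through]
    omega
  obtain ⟨l, hl, hmax⟩ := exists_max_image _ (lineCard (supp c)) hne
  have hRl : R ∈ l := (mem_filter.1 hl).2
  have hsum := (sum_lineCard_through (L := L) (supp c) R).symm.trans_le
    (sum_le_card_nsmul _ _ _ hmax)
  rw [if_pos (mem_supp.2 hR), card_lines_through, hord, smul_eq_mul] at hsum
  have hbound := hC.weight_bound c hc l (hord ▸ hshort l hRl)
  rw [hord] at hbound
  have hpos : 0 < lineCard (supp c) l := card_pos.2 ⟨R, mem_filter.2 ⟨mem_supp.2 hR, hRl⟩⟩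
  refine ⟨l, hRl, ?_⟩
  by_contra! hlt
  nlinarith

lemma IsLineBounded.eq_zero_of_card_supp_le (hC : IsLineBounded L C) (hord : order P L = q ^ 2)
    {c : P → ZMod p} (hc : c ∈ C) (hshort : ∀ l : L, 2 * lineCard (supp c) l < q ^ 2)
    (hcard : #(supp c) ≤ q ^ 3) : c = 0 := by
  funext R
  by_contra hR
  obtain ⟨l, -, hl⟩ := hC.exists_le_lineCard hord hc hR fun l _ => hshort l
  have hbound := hC.weight_bound c hc l (hord ▸ hshort l)
  rw [hord] at hbound
  have := hshort l
  have := mul_add_sq_le_mul_add_sq hl (n := q ^ 2) (by nlinarith [sq_nonneg ((q : ℤ) - 1)])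
  nlinarith

lemma IsLineBounded.mul_lineCard_le (hC : IsLineBounded L C) [Fact p.Prime]
    (hU : setVec p (U : Set P) ∈ C) (hodd : Odd (order P L)) (hdvd : p ∣ order P L) {l : L}
    (hmod : lineCard U l ≡ 1 [MOD p]) :
    lineCard U l * (order P L + 2) ≤ #U + lineCard U l * lineCard U l := by
  obtain hlt | hge := Nat.lt_or_ge (2 * lineCard U l) (order P L)
  · have hbound := hC.weight_bound _ hU l
    rw [supp_setVec] at hbound
    exact hbound hlt
  have hne : 2 * lineCard U l ≠ order P L + 1 := fun heq => by
    have h₁ : 2 * lineCard U l ≡ 2 * 1 [MOD p] := hmod.mul_left 2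
    have h₂ : order P L + 1 ≡ 0 + 1 [MOD p] := ((Nat.modEq_zero_iff_dvd).2 hdvd).add_right 1
    have hp1 := (Nat.modEq_iff_dvd' (by norm_num)).1 ((heq ▸ h₁).symm.trans h₂).symm
    exact (Fact.out : p.Prime).one_lt.not_ge (Nat.le_of_dvd (by norm_num) hp1)
  -- More than half of `l` lies in `U`, so apply the bound to the word `U - l` instead.
  obtain ⟨k, hk⟩ := hodd
  have hcompl := lineCard_add_lineCard_compl U l
  have hcard := card_supp_rest_le (p := p) U {l}
  have hbound := hC.weight_bound _ (hC.rest_mem hU {l}) l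
  rw [lineCard_supp_rest_singleton_self] at hbound
  simp only [sum_singleton, card_singleton, Nat.sub_self, mul_zero, add_zero] at hcard
  have hb := hbound (by omega)
  zify at *
  nlinarith

end LineBounded

section LineTypes

variable {P L : Type*} [Membership P L] [ProjectivePlane P L] [Fintype P] [Finite L] {p q : ℕ}
  {C : Submodule (ZMod p) (P → ZMod p)} {U : Finset P} {A : Finset L}

lemma IsLineBounded.rest_eq_zero (hC : IsLineBounded L C) (hord : order P L = q ^ 2) (hq : 9 ≤ q)
    (hUC : setVec p (U : Set P) ∈ C) (hU : #U ≤ (q + 1) * (q ^ 2 + 1))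
    (hA : ∀ m ∈ A, q ^ 2 + 1 ≤ lineCard U m + q) (hA' : ∀ m ∉ A, lineCard U m ≤ q + 1)
    (htwo : 2 ≤ #A) : rest p U A = 0 := by
  have hcardA := card_le_of_long_lines hq hU hA
  have hcompl : ∀ m ∈ A, lineCard Uᶜ m ≤ q := fun m hm => by
    have := hord ▸ lineCard_add_lineCard_compl U m
    have := hA m hm
    omega
  refine hC.eq_zero_of_card_supp_le hord (hC.rest_mem hUC A) (fun m => ?_) ?_
  · by_cases hm : m ∈ A
    · have := lineCard_supp_rest_le_of_mem (p := p) U hm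
      have := hcompl m hm
      nlinarith
    · have := lineCard_supp_rest_le_of_notMem (p := p) U hm
      have := hA' m hm
      nlinarith
  · have hsupp := card_supp_rest_le (p := p) U A
    have hlow : #A * (q ^ 2 + 1) ≤ ∑ l ∈ A, lineCard U l + #A * q := by
      rw [← smul_eq_mul, ← smul_eq_mul, ← sum_const, ← sum_const, ← sum_add_distrib]
      exact sum_le_sum hA
    have hup : ∑ l ∈ A, lineCard Uᶜ l ≤ #A * q := sum_le_card_nsmul _ _ _ hcompl
    have hpred : #A * (#A - 1) + #A = #A * #A := by
      obtain ⟨a, ha⟩ := Nat.exists_eq_add_of_le htwo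
      rw [ha, show 2 + a - 1 = a + 1 by omega]
      ring
    generalize ∑ l ∈ A, lineCard U l = x at *
    generalize ∑ l ∈ A, lineCard Uᶜ l = y at *
    zify at *
    nlinarith [mul_nonneg (sub_nonneg.2 htwo) (show (0 : ℤ) ≤ q ^ 2 - 2 * q - #A by nlinarith)]

lemma IsLineBounded.rest_singleton_eq_zero [Fact p.Prime] (hC : IsLineBounded L C)
    (hord : order P L = q ^ 2) (hq : 3 ≤ q) (hUC : setVec p (U : Set P) ∈ C) {l : L}
    (hl : lineCard U l = q ^ 2 + 1) (hother : ∀ m ≠ l, lineCard U m ≤ q + 1) :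
    rest p U {l} = 0 := by
  have hle (m : L) : lineCard (supp (rest p U {l})) m ≤ q := by
    by_cases hm : m = l
    · have := hord ▸ lineCard_add_lineCard_compl U l
      rw [hm, lineCard_supp_rest_singleton_self]
      omega
    · obtain ⟨T, ⟨hTm, hTl⟩, -⟩ := HasPoints.existsUnique_point P L m l hm
      rw [lineCard_supp_rest_singleton_of_mem hm hTm hTl (mem_of_lineCard_eq (hord ▸ hl) hTl)]
      have := hother m hm
      omega
  funext R
  by_contra hR
  obtain ⟨m, -, hm⟩ := hC.exists_le_lineCard hord (hC.rest_mem hUC {l}) hR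
    fun m _ => by nlinarith [hle m]
  have := hle m
  omega

/-- If `R ∈ l \ U`, the word `U - l` has a line through `R` with exactly `q + 2` points of its
support, which is too small for that. -/
lemma IsLineBounded.mem_of_single_long_line [Fact p.Prime] (hC : IsLineBounded L C)
    (hord : order P L = q ^ 2) (hq : 9 ≤ q) (hUC : setVec p (U : Set P) ∈ C)
    {l : L} (hl : q ^ 2 + 1 ≤ lineCard U l + q) (hcard : #U ≤ q ^ 3 + lineCard U l)
    (hother : ∀ m ≠ l, lineCard U m ≤ q + 1 ∧ lineCard U m ≠ q) {R : P} (hR : R ∈ l) :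
    R ∈ U := by
  by_contra hRU
  have hcompl := hord ▸ lineCard_add_lineCard_compl U l
  have hself := lineCard_supp_rest_singleton_self (p := p) U l
  have hne {m : L} (hml : m ≠ l) (hRm : R ∈ m) :
      lineCard (supp (rest p U {l})) m = lineCard U m + 1 :=
    lineCard_supp_rest_singleton_of_notMem hml hRm hR hRU
  have hshort (m : L) (hRm : R ∈ m) : 2 * lineCard (supp (rest p U {l})) m < q ^ 2 := by
    by_cases hml : m = l
    · rw [hml, hself]
      nlinarith
    · rw [hne hml hRm]
      nlinarith [(hother m hml).1]
  have hRsupp : rest p U {l} R ≠ 0 := by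
    rw [← mem_supp, supp_rest_singleton]
    simp [hRU, hR]
  obtain ⟨m, hRm, hm⟩ := hC.exists_le_lineCard hord (hC.rest_mem hUC {l}) hRsupp hshort
  have hml : m ≠ l := fun h => by
    rw [h, hself] at hm
    omega
  have hbound := hC.weight_bound _ (hC.rest_mem hUC {l}) m (hord ▸ hshort m hRm)
  have hsize : lineCard U m = q + 1 := by
    have := hother m hml
    have := hne hml hRm
    omega
  have hsupp := card_supp_rest_le (p := p) U {l}
  rw [hne hml hRm, hsize, hord] at hbound
  simp only [sum_singleton, card_singleton, Nat.sub_self, mul_zero, add_zero] at hsupp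
  have : #(supp (rest p U {l})) ≤ q ^ 3 + q := by omega
  nlinarith

lemma lineCard_compl_mul_le_of_rest_eq_zero (hrest : rest p U A = 0) {l : L} (hl : l ∈ A) :
    lineCard Uᶜ l * (p - 1) + 1 ≤ #A := by
  rw [← sum_degree_sub_one_on (P := P) hl, lineCard_eq_sum, sum_mul]
  refine add_le_add_left (sum_le_sum fun R hR => ?_) 1
  split_ifs with hRU
  · have hdeg := degree_modEq_of_rest_eq_zero hrest R
    rw [if_neg (mem_compl.1 hRU), Nat.modEq_zero_iff_dvd] at hdeg
    have := Nat.le_of_dvd (degree_pos hl (mem_filter.1 hR).2) hdeg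
    omega
  · simp

section PrimeSquare

lemma add_eq_or_add_two_mul_le {s n : ℕ} (hmod : s ≡ n [MOD p]) (hlt : s < n) :
    s + p = n ∨ s + 2 * p ≤ n := by
  have hle : s + p ≤ n := hmod.add_le_of_lt hlt
  refine or_iff_not_imp_left.2 fun hne => ?_
  have := (show s + p ≡ n [MOD p] by simpa [Nat.ModEq] using hmod).add_le_of_lt (hle.lt_of_ne hne)
  omega

variable [Fact p.Prime]

lemma three_le_of_ne_two (hp : p ≠ 2) : 3 ≤ p := by
  have := (Fact.out : p.Prime).two_le
  omega

lemma nine_le_sq (hp : p ≠ 2) : 9 ≤ p ^ 2 := by nlinarith [three_le_of_ne_two hp]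

lemma IsLineBounded.lineCard_le_or_le (hC : IsLineBounded L C) (hord : order P L = q ^ 2)
    (hq : q = p ^ 2) (hp : p ≠ 2) (hUC : setVec p (U : Set P) ∈ C)
    (hmod : ∀ l : L, lineCard U l ≡ 1 [MOD p]) {s : ℕ} (hs : s + p ≤ q ^ 2 + 1)
    (hcard : #U ≤ q ^ 3 + s) (m : L) : lineCard U m ≤ q + 1 ∨ q ^ 2 + 1 ≤ lineCard U m + q := by
  have hp3 := three_le_of_ne_two hp
  have hq0 : q ≡ 0 [MOD p] := (Nat.modEq_zero_iff_dvd).2 (hq ▸ dvd_pow_self p two_ne_zero)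
  have hodd : Odd p := (Fact.out : p.Prime).odd_of_ne_two hp
  have hbound := hC.mul_lineCard_le hUC (hord ▸ hq ▸ hodd.pow.pow)
    (hord ▸ hq ▸ dvd_pow (dvd_pow_self p two_ne_zero) two_ne_zero) (hmod m)
  rw [hord] at hbound
  by_contra! hcon
  obtain ⟨hlow, hhigh⟩ := hcon
  have hgap_low : q + 1 + p ≤ lineCard U m :=
    ((hq0.add_right 1).trans (hmod m).symm).add_le_of_lt hlow
  have hgap_high : lineCard U m + q + p ≤ q ^ 2 + 1 :=
    (((hmod m).add hq0).trans (((hq0.pow 2).add_right 1).symm)).add_le_of_lt hhigh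
  have := mul_add_sq_le_mul_add_sq hgap_low (n := q ^ 2) (by omega)
  have : p ^ 3 * 3 ≤ p ^ 3 * p := Nat.mul_le_mul_left _ hp3
  subst hq
  nlinarith [pow_pos (show 0 < p by omega) 3]

lemma IsLineBounded.lineCard_compl_lt_two_mul (hC : IsLineBounded L C)
    (hord : order P L = q ^ 2) (hq : q = p ^ 2) (hp : p ≠ 2) (hUC : setVec p (U : Set P) ∈ C)
    (hU : #U ≤ (q + 1) * (q ^ 2 + 1)) (hA : ∀ m ∈ A, q ^ 2 + 1 ≤ lineCard U m + q)
    (hA' : ∀ m ∉ A, lineCard U m ≤ q + 1) (htwo : 2 ≤ #A) {l : L} (hl : l ∈ A) :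
    lineCard Uᶜ l < 2 * p := by
  have hp3 := three_le_of_ne_two hp
  have hq9 : 9 ≤ q := hq ▸ nine_le_sq hp
  have hmany :=
    lineCard_compl_mul_le_of_rest_eq_zero (hC.rest_eq_zero hord hq9 hUC hU hA hA' htwo) hl
  have hcardA := card_le_of_long_lines hq9 hU hA
  by_contra! hge
  have := Nat.mul_le_mul_right (p - 1) hge
  obtain ⟨k, rfl⟩ := Nat.exists_eq_add_of_le hp3
  rw [show 3 + k - 1 = k + 2 by omega] at *
  nlinarith

lemma IsLineBounded.lineCard_le_or_eq_of_card_le (hC : IsLineBounded L C)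
    (hord : order P L = q ^ 2) (hq : q = p ^ 2) (hp : p ≠ 2) (hUC : setVec p (U : Set P) ∈ C)
    (hmod : ∀ l : L, lineCard U l ≡ 1 [MOD p]) {l : L} (hl : lineCard U l ≤ q ^ 2)
    (hcard : #U ≤ q ^ 3 + lineCard U l) :
    lineCard U l ≤ q + 1 ∨ lineCard U l + p = q ^ 2 + 1 := by
  have := Fintype.ofFinite L
  have hp3 := three_le_of_ne_two hp
  have hq9 : 9 ≤ q := hq ▸ nine_le_sq hp
  have hq0 : q ≡ 0 [MOD p] := (Nat.modEq_zero_iff_dvd).2 (hq ▸ dvd_pow_self p two_ne_zero)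
  have hmodl : lineCard U l ≡ q ^ 2 + 1 [MOD p] := (hmod l).trans ((hq0.pow 2).add_right 1).symm
  refine or_iff_not_imp_left.2 fun hlow => (add_eq_or_add_two_mul_le hmodl (by omega)).resolve_right
    fun hhigh => ?_
  have hdich := hC.lineCard_le_or_le hord hq hp hUC hmod (by omega) hcard
  have hlong := (hdich l).resolve_left (by omega)
  let A : Finset L := {m | q ^ 2 + 1 ≤ lineCard U m + q}
  have hA : ∀ m ∈ A, q ^ 2 + 1 ≤ lineCard U m + q := fun m hm => (mem_filter.1 hm).2
  have hA' : ∀ m ∉ A, lineCard U m ≤ q + 1 := fun m hm =>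
    (hdich m).resolve_right fun h => hm (mem_filter.2 ⟨mem_univ _, h⟩)
  have hlA : l ∈ A := mem_filter.2 ⟨mem_univ _, hlong⟩
  have hcompl := hord ▸ lineCard_add_lineCard_compl U l
  obtain hone | htwo := Nat.lt_or_ge #A 2
  · have hother : ∀ m ≠ l, lineCard U m ≤ q + 1 ∧ lineCard U m ≠ q := fun m hm => by
      refine ⟨hA' m fun h => hm (card_le_one.1 (by omega) m h l hlA), fun h => ?_⟩
      have := (Nat.modEq_iff_dvd' zero_le_one).1 ((h ▸ hq0.symm).trans (hmod m))
      exact absurd (Nat.le_of_dvd one_pos this) (by omega)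
    obtain ⟨R, hR⟩ : ({R ∈ Uᶜ | R ∈ l} : Finset P).Nonempty :=
      card_pos.1 (show 0 < lineCard Uᶜ l by omega)
    obtain ⟨hRU, hRl⟩ := mem_filter.1 hR
    exact mem_compl.1 hRU (hC.mem_of_single_long_line hord hq9 hUC hlong hcard hother hRl)
  · have := hC.lineCard_compl_lt_two_mul hord hq hp hUC (by nlinarith) hA hA' htwo hlA
    omega

lemma IsLineBounded.rest_full_lines_eq_zero (hC : IsLineBounded L C) (hord : order P L = q ^ 2)
    (hq : 9 ≤ q) (hUC : setVec p (U : Set P) ∈ C) (hU : #U ≤ (q + 1) * (q ^ 2 + 1))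
    (hA : ∀ m ∈ A, lineCard U m = q ^ 2 + 1) (hA' : ∀ m ∉ A, lineCard U m ≤ q + 1)
    (hne : A.Nonempty) : rest p U A = 0 := by
  obtain hone | htwo := Nat.lt_or_ge #A 2
  · obtain ⟨l, rfl⟩ := card_eq_one.1 (le_antisymm (Nat.le_of_lt_succ hone) (card_pos.2 hne))
    exact hC.rest_singleton_eq_zero hord (by omega) hUC (hA l (mem_singleton_self l))
      fun m hm => hA' m (mt mem_singleton.1 hm)
  · exact hC.rest_eq_zero hord hq hUC hU (fun m hm => by rw [hA m hm]; omega) hA' htwo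

lemma IsLineBounded.eq_pencil (hC : IsLineBounded L C) (hord : order P L = q ^ 2)
    (hq : q = p ^ 2) (hp : p ≠ 2) (hUC : setVec p (U : Set P) ∈ C)
    (hU : #U ≤ (q + 1) * (q ^ 2 + 1)) (hA : ∀ m ∈ A, lineCard U m = q ^ 2 + 1)
    (hA' : ∀ m ∉ A, lineCard U m ≤ q + 1) (hne : A.Nonempty) :
    #A ≤ q + 1 ∧ (∃ R : P, ∀ l ∈ A, R ∈ l) ∧ ∀ T, T ∈ U ↔ ∃ l ∈ A, T ∈ l := by
  have hp3 := three_le_of_ne_two hp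
  have hq9 : 9 ≤ q := hq ▸ nine_le_sq hp
  have hfull {l : L} (hl : l ∈ A) {T : P} (hT : T ∈ l) : T ∈ U :=
    mem_of_lineCard_eq (hord ▸ hA l hl) hT
  have hrest := hC.rest_full_lines_eq_zero hord hq9 hUC hU hA hA' hne
  have hmod {T : P} (hT : T ∈ U) : 1 ≡ degree A T [MOD p] := by
    simpa only [if_pos hT] using (degree_modEq_of_rest_eq_zero hrest T).symm
  have hcard : #A ≤ q + 3 := card_le_of_long_lines hq9 hU fun m hm => by rw [hA m hm]; omega
  have hgap (T : P) (hT : 2 ≤ degree A T) : p + 1 ≤ degree A T := by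
    obtain ⟨l, hl⟩ := card_pos.1 (show 0 < degree A T by omega)
    have := (hmod (hfull (mem_filter.1 hl).1 (mem_filter.1 hl).2)).add_le_of_lt hT
    omega
  obtain ⟨R, hR⟩ := exists_common_point_of_degree_gap hne (by omega) hgap
  refine ⟨?_, ⟨R, hR⟩, fun T => ⟨fun hT => ?_, fun ⟨l, hl, hTl⟩ => hfull hl hTl⟩⟩
  · by_contra! hlt
    obtain ⟨l, hl⟩ := hne
    have hq1 : q + 1 ≡ degree A R [MOD p] :=
      (((Nat.modEq_zero_iff_dvd).2 (hq ▸ dvd_pow_self p two_ne_zero)).add_right 1).trans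
        (hmod (hfull hl (hR l hl)))
    rw [degree, filter_true_of_mem hR] at hq1
    have := hq1.add_le_of_lt hlt
    omega
  · have hpos : degree A T ≠ 0 := fun h0 => by
      have := (Nat.modEq_iff_dvd' zero_le_one).1 (h0 ▸ hmod hT).symm
      exact absurd (Nat.le_of_dvd one_pos this) (by omega)
    obtain ⟨l, hl⟩ := card_pos.1 (Nat.pos_of_ne_zero hpos)
    exact ⟨l, (mem_filter.1 hl).1, (mem_filter.1 hl).2⟩

end PrimeSquare

lemma IsLineBounded.cube_add_one_le_card [Fact p.Prime] (hC : IsLineBounded L C)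
    (hord : order P L = q ^ 2) (hq : 3 ≤ q) (hUC : setVec p (U : Set P) ∈ C) (hne : U.Nonempty)
    (hle : ∀ l : L, lineCard U l ≤ q + 1) : q ^ 3 + 1 ≤ #U := by
  have hshort (l : L) : 2 * lineCard U l < q ^ 2 := by nlinarith [hle l]
  obtain ⟨R, hR⟩ := hne
  have hsupp := supp_setVec (p := p) U
  obtain ⟨l, -, hl⟩ := hC.exists_le_lineCard hord hUC (mem_supp.1 (hsupp.symm ▸ hR))
    fun l _ => hsupp.symm ▸ hshort l
  have hbound := hC.weight_bound _ hUC l (hord ▸ hsupp.symm ▸ hshort l)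
  rw [hsupp] at hl hbound
  rw [hord, le_antisymm (hle l) hl] at hbound
  nlinarith

end LineTypes

section Unital

variable {P L : Type*} [Membership P L] [ProjectivePlane P L] [Finite P] [Fintype L] {q : ℕ}
  {U : Finset P}

/-- `U` is a unital of a projective plane of order `q²`, recorded together with the number of
tangents (lines meeting `U` once) through a point on and off `U`. -/
structure IsUnital {P : Type*} (L : Type*) [Membership P L] [Fintype L] (q : ℕ) (U : Finset P) :
    Prop where
  card_eq : #U = q ^ 3 + 1
  lineCard_eq : ∀ m : L, lineCard U m = 1 ∨ lineCard U m = q + 1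
  card_tangents_of_mem : ∀ R ∈ U, #{l : L | R ∈ l ∧ lineCard U l = 1} = 1
  card_tangents_of_notMem : ∀ R ∉ U, #{l : L | R ∈ l ∧ lineCard U l = 1} = q + 1

lemma card_tangents_mul (hord : order P L = q ^ 2)
    (hline : ∀ l : L, lineCard U l = 1 ∨ lineCard U l = q + 1) (R : P) :
    #{l : L | R ∈ l ∧ lineCard U l = 1} * q + (#U + if R ∈ U then q ^ 2 else 0)
      = (q + 1) * (q ^ 2 + 1) := by
  have hsum := sum_lineCard_through (L := L) U R
  have hl (l : L) : (if lineCard U l = 1 then 1 else 0) * q + lineCard U l = q + 1 := by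
    obtain h | h := hline l
    · rw [h, if_pos rfl]
      ring
    · rw [h]
      split_ifs with h0 <;> omega
  rw [hord] at hsum
  rw [← hsum, ← filter_filter, card_filter, sum_mul, ← sum_add_distrib,
    sum_congr rfl fun l _ => hl l, sum_const, card_lines_through, hord, smul_eq_mul, mul_comm]

lemma isUnital_of_card_le (hord : order P L = q ^ 2) (hq : 2 ≤ q) (hcard : q ^ 3 + 1 ≤ #U)
    (hpos : ∀ l : L, 1 ≤ lineCard U l) (hle : ∀ l : L, lineCard U l ≤ q + 1) :
    IsUnital L q U := by
  have hnonneg : ∀ l ∈ (univ : Finset L), 0 ≤ ((q : ℤ) + 1 - lineCard U l) * (lineCard U l - 1) :=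
    fun l _ => mul_nonneg (by have := hle l; zify at this; linarith)
      (by have := hpos l; zify at this; linarith)
  have hdefect := sum_lineCard_defect (L := L) hord U
  have hcard_eq : #U = q ^ 3 + 1 := by
    refine le_antisymm ?_ hcard
    by_contra! hlt
    have hsum := hdefect ▸ sum_nonneg hnonneg
    zify at hlt hq
    have : (0 : ℤ) < #U - (q ^ 2 + q + 1) := by nlinarith
    nlinarith
  have hline (l : L) : lineCard U l = 1 ∨ lineCard U l = q + 1 := by
    rw [hcard_eq, Nat.cast_add, Nat.cast_pow, Nat.cast_one, sub_self, zero_mul] at hdefect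
    obtain h | h := mul_eq_zero.1 ((sum_eq_zero_iff_of_nonneg hnonneg).1 hdefect l (mem_univ l))
    · right; zify; linarith
    · left; zify; linarith
  refine ⟨hcard_eq, hline, fun R hR => ?_, fun R hR => ?_⟩ <;>
    refine Nat.eq_of_mul_eq_mul_right (show 0 < q by omega) ?_ <;>
    have := card_tangents_mul hord hline R
  · rw [if_pos hR, hcard_eq] at this
    nlinarith
  · rw [if_neg hR, hcard_eq] at this
    nlinarith

end Unital

/-! ### Moments and Hankel determinants -/

section Hankel

open Polynomial

section Determinant

variable {R n : Type*} [CommRing R] [Fintype n]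

lemma coeff_prod_sum {ι : Type*} (s : Finset ι) (f : ι → R[X]) (d : ι → ℕ)
    (hd : ∀ i ∈ s, (f i).natDegree ≤ d i) :
    (∏ i ∈ s, f i).coeff (∑ i ∈ s, d i) = ∏ i ∈ s, (f i).coeff (d i) := by
  induction s using Finset.induction_on with
  | empty => simp
  | insert a s ha ih =>
    have hs : ∀ i ∈ s, (f i).natDegree ≤ d i := fun i hi => hd i (mem_insert_of_mem hi)
    rw [prod_insert ha, sum_insert ha, prod_insert ha,
      coeff_mul_add_eq_of_natDegree_le (hd a (mem_insert_self _ _))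
        ((natDegree_prod_le s f).trans (sum_le_sum hs)), ih hs]

lemma sum_perm_add (d : n → ℕ) (σ : Equiv.Perm n) : ∑ i, (d (σ i) + d i) = 2 * ∑ i, d i := by
  rw [sum_add_distrib, Equiv.sum_comp σ d, two_mul]

variable [DecidableEq n]

lemma natDegree_det_le (M : Matrix n n R[X]) (d : n → ℕ)
    (hM : ∀ i j, (M i j).natDegree ≤ d i + d j) : M.det.natDegree ≤ 2 * ∑ i, d i := by
  rw [Matrix.det_apply]
  refine natDegree_sum_le_of_forall_le _ _ fun σ _ => ?_
  rw [← sum_perm_add d σ]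
  refine le_trans ?_ ((natDegree_prod_le univ _).trans (sum_le_sum fun i _ => hM (σ i) i))
  obtain h | h := Int.units_eq_one_or (Equiv.Perm.sign σ) <;> simp [h]

lemma coeff_det (M : Matrix n n R[X]) (d : n → ℕ) (hM : ∀ i j, (M i j).natDegree ≤ d i + d j) :
    M.det.coeff (2 * ∑ i, d i) = (Matrix.of fun i j => (M i j).coeff (d i + d j)).det := by
  rw [Matrix.det_apply, Matrix.det_apply, finsetSum_coeff]
  refine sum_congr rfl fun σ _ => ?_
  have hprod := coeff_prod_sum univ (fun i => M (σ i) i) (fun i => d (σ i) + d i) fun i _ => hM _ _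
  rw [sum_perm_add] at hprod
  obtain h | h := Int.units_eq_one_or (Equiv.Perm.sign σ) <;> simp [h, hprod]

lemma pow_card_dvd_det (M : Matrix n n R) (c : R) (J : Finset n) (hJ : ∀ j ∈ J, ∀ i, c ∣ M i j) :
    c ^ #J ∣ M.det := by
  rw [Matrix.det_apply]
  refine dvd_sum fun σ _ => dvd_smul_of_dvd _ ?_
  rw [← prod_const]
  exact (prod_dvd_prod_of_dvd _ _ fun j hj => hJ j hj (σ j)).trans
    (prod_dvd_prod_of_subset _ _ _ (subset_univ J))

end Determinant

variable {F : Type*} [Field F]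

lemma exists_det_one_mul_mul_eq_diagonal {n : Type*} [Fintype n] [DecidableEq n]
    (M : Matrix n n F) :
    ∃ (A B : Matrix n n F) (D : n → F), A.det = 1 ∧ B.det = 1 ∧ A * M * B = Matrix.diagonal D ∧
      M.rank + #{i | D i = 0} = Fintype.card n := by
  obtain ⟨L, L', D, hD⟩ :=
    Matrix.Pivot.exists_list_transvec_mul_mul_list_transvec_eq_diagonal M
  have hA := Matrix.TransvectionStruct.det_toMatrix_prod L
  have hB := Matrix.TransvectionStruct.det_toMatrix_prod L'
  refine ⟨_, _, D, hA, hB, hD, ?_⟩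
  have hrank := congrArg Matrix.rank hD
  rw [Matrix.rank_mul_eq_left_of_isUnit_det _ _ (by rw [hB]; exact isUnit_one),
    Matrix.rank_mul_eq_right_of_isUnit_det _ _ (by rw [hA]; exact isUnit_one),
    Matrix.rank_diagonal, Fintype.card_subtype] at hrank
  rw [hrank, add_comm]
  exact card_filter_add_card_filter_not (s := univ) fun i => D i = 0

lemma pow_dvd_det_of_rank_eval_le {n : Type*} [Fintype n] [DecidableEq n]
    (M : Matrix n n F[X]) (y : F) {r : ℕ}
    (hr : (M.map (eval y)).rank ≤ r) : (X - C y) ^ (Fintype.card n - r) ∣ M.det := by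
  obtain ⟨A, B, D, hA, hB, hD, hrank⟩ := exists_det_one_mul_mul_eq_diagonal (M.map (eval y))
  have hdet : (A.map C * M * B.map C).det = M.det := by
    have hC (N : Matrix n n F) : (N.map C).det = C N.det := ((C : F →+* F[X]).map_det N).symm
    rw [Matrix.det_mul, Matrix.det_mul, hC, hC, hA, hB, C_1, one_mul, mul_one]
  have heval : (A.map C * M * B.map C).map (eval y) = Matrix.diagonal D := by
    have hmap (N : Matrix n n F[X]) : N.map (eval y) = (evalRingHom y).mapMatrix N := rfl
    rw [← hD, hmap, map_mul, map_mul, hmap]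
    congr 2 <;> ext i j <;> simp
  refine (pow_dvd_pow _ (by omega)).trans
    (hdet ▸ pow_card_dvd_det _ (X - C y) {i | D i = 0} fun j hj i => ?_)
  rw [dvd_iff_isRoot, IsRoot, ← Matrix.map_apply (f := eval y), heval, Matrix.diagonal_apply]
  split_ifs with h
  · rw [h, (mem_filter.1 hj).2]
  · rfl

variable [Fintype F]

/-- The Hankel matrix of the power moments of `a`, whose `(i, j)` entry is the moment of order
`i + j`. -/
def momentMatrix (a : F → F) (s : ℕ) : Matrix (Fin s) (Fin s) F :=
  Matrix.of fun i j => ∑ x, a x * x ^ (i + j : ℕ)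

lemma momentMatrix_eq_mul {κ : Type*} [Fintype κ] [DecidableEq κ] (a : F → F) (s : ℕ) (g : κ ↪ F)
    (hg : ∀ x, a x ≠ 0 → x ∈ Set.range g) :
    momentMatrix a s = (Matrix.of fun (k : κ) (j : Fin s) => g k ^ (j : ℕ)).transpose *
      (Matrix.diagonal (a ∘ g) * Matrix.of fun (k : κ) (j : Fin s) => g k ^ (j : ℕ)) := by
  ext i j
  rw [Matrix.mul_apply, momentMatrix, Matrix.of_apply]
  simp only [Matrix.transpose_apply, Matrix.of_apply, Matrix.diagonal_mul, Function.comp_apply]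
  refine (sum_of_injOn g g.injective.injOn (by simp) (fun x _ hx => ?_) fun k _ => by ring).symm
  rw [coe_univ, Set.image_univ] at hx
  rw [not_imp_comm.1 (hg x) hx, zero_mul]

lemma rank_momentMatrix_le (a : F → F) (s : ℕ) : (momentMatrix a s).rank ≤ #(supp a) := by
  rw [momentMatrix_eq_mul a s (Function.Embedding.subtype (· ∈ supp a)) (by simp [mem_supp])]
  exact (Matrix.rank_mul_le_left _ _).trans ((Matrix.rank_le_card_width _).trans (by simp))

lemma det_momentMatrix_ne_zero (a : F → F) : (momentMatrix a #(supp a)).det ≠ 0 := by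
  let e := (supp a).equivFin.symm
  have he (k) : a (e k) ≠ 0 := mem_supp.1 (e k).2
  have hvand : (Matrix.vandermonde fun k => (e k : F)).det ≠ 0 :=
    Matrix.det_vandermonde_ne_zero_iff.2 (Subtype.val_injective.comp e.injective)
  have := momentMatrix_eq_mul a #(supp a) (e.toEmbedding.trans (Function.Embedding.subtype _))
    fun x hx => ⟨e.symm ⟨x, mem_supp.2 hx⟩, by simp⟩
  have hdiag : (Matrix.diagonal fun k => a (e k)).det ≠ 0 := by
    rw [Matrix.det_diagonal]
    exact prod_ne_zero_iff.2 fun k _ => he k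
  rw [this, Matrix.det_mul, Matrix.det_mul, Matrix.det_transpose]
  exact mul_ne_zero hvand (mul_ne_zero hdiag hvand)

/-- With `s = #(supp a)`, the Hankel determinant of the `f k` is a nonzero polynomial of degree at
most `s * (s - 1)` that vanishes at each `y` to order at least `s - #(supp (b y))`. -/
lemma card_supp_mul_card_le (a : F → F) (b : F → F → F)
    (hf : ∀ k < 2 * #(supp a), ∃ f : F[X], f.natDegree ≤ k ∧ f.coeff k = ∑ x, a x * x ^ k ∧
      ∀ y, f.eval y = ∑ x, b y x * x ^ k) :
    #(supp a) * Fintype.card F ≤ #(supp a) * (#(supp a) - 1) + ∑ y, #(supp (b y)) := by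
  choose! f hfdeg hfcoeff hfeval using hf
  set s := #(supp a)
  have hlt (i j : Fin s) : (i + j : ℕ) < 2 * s := by omega
  let M : Matrix (Fin s) (Fin s) F[X] := Matrix.of fun i j => f (i + j)
  have hMdeg (i j) : (M i j).natDegree ≤ (i : ℕ) + j := hfdeg _ (hlt i j)
  have hdet : M.det ≠ 0 := fun h0 => by
    refine det_momentMatrix_ne_zero a (Eq.trans ?_ (coeff_zero (2 * ∑ i : Fin s, (i : ℕ))))
    rw [← h0, coeff_det M (fun i => (i : ℕ)) hMdeg]
    congr 1
    ext i j
    exact (hfcoeff _ (hlt i j)).symm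
  have hdvd : ∏ y, (X - C y) ^ (s - #(supp (b y))) ∣ M.det := by
    refine prod_dvd_of_coprime (fun y _ z _ hyz =>
      (pairwise_coprime_X_sub_C Function.injective_id hyz).pow) fun y _ => ?_
    have heval : M.map (eval y) = momentMatrix (b y) s := by
      ext i j
      exact hfeval _ (hlt i j) y
    simpa using pow_dvd_det_of_rank_eval_le M y (heval ▸ rank_momentMatrix_le (b y) s)
  have hdeg := (natDegree_le_of_dvd hdvd hdet).trans (natDegree_det_le M (fun i => (i : ℕ)) hMdeg)
  rw [natDegree_prod _ _ fun y _ => pow_ne_zero _ (X_sub_C_ne_zero y),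
    Fin.sum_univ_eq_sum_range (fun i => i), mul_comm 2, sum_range_id_mul_two] at hdeg
  simp only [natDegree_pow, natDegree_X_sub_C, mul_one] at hdeg
  calc s * Fintype.card F = ∑ _y : F, s := by simp [mul_comm]
    _ ≤ ∑ y, ((s - #(supp (b y))) + #(supp (b y))) := sum_le_sum fun y _ => by omega
    _ ≤ s * (s - 1) + ∑ y, #(supp (b y)) := by
      rw [sum_add_distrib]
      exact Nat.add_le_add_right hdeg _

end Hankel

section VectorFunctions

section Moment

variable {F ι : Type*} [Field F] [Fintype F]

/-- The `k`-th power moment of a function on vectors, taken along the lines of direction `e`. -/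
def moment (e : ι → F) (k : ℕ) : ((ι → F) → F) →ₗ[F] (ι → F) → F where
  toFun φ w := ∑ x, φ (x • e + w) * x ^ k
  map_add' φ ψ := by ext w; simp [add_mul, sum_add_distrib]
  map_smul' a φ := by ext w; simp [mul_assoc, mul_sum]

lemma moment_apply (e : ι → F) (k : ℕ) (φ : (ι → F) → F) (w : ι → F) :
    moment e k φ w = ∑ x, φ (x • e + w) * x ^ k := rfl

end Moment

variable (F ι : Type*) [Field F] [Fintype ι]

/-- The span of the indicators of the linear hyperplanes `m ⬝ᵥ v = 0`, as functions of the
vector `v`. -/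
def hyperplaneSpan : Submodule F ((ι → F) → F) :=
  Submodule.span F (Set.range fun m v => if m ⬝ᵥ v = 0 then 1 else 0)

/-- The span of the `k`-th powers of linear forms. -/
def powerSpan (k : ℕ) : Submodule F ((ι → F) → F) :=
  Submodule.span F (Set.range fun m v => (m ⬝ᵥ v) ^ k)

variable {F ι}

lemma exists_polynomial_of_mem_powerSpan {k : ℕ} {g : (ι → F) → F} (hg : g ∈ powerSpan F ι k)
    (u v : ι → F) : ∃ f : Polynomial F, f.natDegree ≤ k ∧ f.coeff k = g u ∧
      ∀ y, f.eval y = g (y • u + v) := by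
  induction hg using Submodule.span_induction with
  | mem g hg =>
    obtain ⟨m, rfl⟩ := hg
    have hdeg : (Polynomial.C (m ⬝ᵥ u) * Polynomial.X + Polynomial.C (m ⬝ᵥ v)).natDegree ≤ 1 :=
      Polynomial.natDegree_linear_le
    refine ⟨(Polynomial.C (m ⬝ᵥ u) * Polynomial.X + Polynomial.C (m ⬝ᵥ v)) ^ k,
      (Polynomial.natDegree_pow_le_of_le k hdeg).trans (mul_one k).le, ?_, fun y => ?_⟩
    · have hcoeff := Polynomial.coeff_pow_of_natDegree_le (m := k) hdeg
      rw [mul_one] at hcoeff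
      simp [hcoeff]
    · simp [dotProduct_add, mul_comm y]
  | zero => exact ⟨0, by simp⟩
  | add g g' _ _ h h' =>
    obtain ⟨f, hdeg, hcoeff, heval⟩ := h
    obtain ⟨f', hdeg', hcoeff', heval'⟩ := h'
    exact ⟨f + f', Polynomial.natDegree_add_le_of_degree_le hdeg hdeg', by simp [hcoeff, hcoeff'],
      by simp [heval, heval']⟩
  | smul a g _ h =>
    obtain ⟨f, hdeg, hcoeff, heval⟩ := h
    exact ⟨a • f, (Polynomial.natDegree_smul_le a f).trans hdeg, by simp [hcoeff], by simp [heval]⟩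

lemma exists_dotProduct_of_mem_powerSpan_one {g : (ι → F) → F} (hg : g ∈ powerSpan F ι 1) :
    ∃ m : ι → F, ∀ w, g w = m ⬝ᵥ w := by
  induction hg using Submodule.span_induction with
  | mem g hg =>
    obtain ⟨m, rfl⟩ := hg
    exact ⟨m, by simp⟩
  | zero => exact ⟨0, by simp⟩
  | add g g' _ _ h h' =>
    obtain ⟨m, hm⟩ := h
    obtain ⟨m', hm'⟩ := h'
    exact ⟨m + m', by simp [hm, hm', add_dotProduct]⟩
  | smul a g _ h =>
    obtain ⟨m, hm⟩ := h
    exact ⟨a • m, by simp [hm]⟩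

/-- The form `∑ i j, v i * N i j * w j ^ q`, sesquilinear when `q` is a power of the
characteristic. -/
def sesqForm (q : ℕ) (N : Matrix ι ι F) (v w : ι → F) : F := v ⬝ᵥ N *ᵥ (w ^ q)

lemma exists_sesqForm_of_mem_powerSpan {p n q : ℕ} [ExpChar F p] (hq : q = p ^ n)
    {g : (ι → F) → F} (hg : g ∈ powerSpan F ι (q + 1)) :
    ∃ N : Matrix ι ι F, ∀ w, g w = sesqForm q N w w := by
  induction hg using Submodule.span_induction with
  | mem g hg =>
    obtain ⟨m, rfl⟩ := hg
    refine ⟨vecMulVec m (m ^ q), fun w => ?_⟩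
    have hpow : (m ⬝ᵥ w) ^ q = m ^ q ⬝ᵥ w ^ q := by
      simp [dotProduct, hq, sum_pow_char_pow, mul_pow]
    simp only [sesqForm, vecMulVec_mulVec, pow_succ, hpow]
    simp [dotProduct_comm w m, mul_comm]
  | zero => exact ⟨0, by simp [sesqForm]⟩
  | add g g' _ _ h h' =>
    obtain ⟨N, hN⟩ := h
    obtain ⟨N', hN'⟩ := h'
    exact ⟨N + N', by simp [hN, hN', sesqForm, add_mulVec]⟩
  | smul a g _ h =>
    obtain ⟨N, hN⟩ := h
    exact ⟨a • N, by simp [hN, sesqForm, smul_mulVec]⟩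

variable [Fintype F]

lemma moment_mem_powerSpan {φ : (ι → F) → F} (hφ : φ ∈ hyperplaneSpan F ι) (e : ι → F) {k : ℕ}
    (hk : k < Fintype.card F - 1) : moment e k φ ∈ powerSpan F ι k := by
  suffices h : hyperplaneSpan F ι ≤ (powerSpan F ι k).comap (moment e k) from h hφ
  refine Submodule.span_le.2 ?_
  rintro _ ⟨m, rfl⟩
  rw [SetLike.mem_coe, Submodule.mem_comap]
  by_cases hm : m ⬝ᵥ e = 0
  · convert Submodule.zero_mem _
    ext w
    simp only [moment_apply, dotProduct_add, dotProduct_smul, hm, smul_zero, zero_add, ← mul_sum,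
      FiniteField.sum_pow_lt_card_sub_one _ _ hk, mul_zero, Pi.zero_apply]
  · refine Submodule.subset_span ⟨(-(m ⬝ᵥ e)⁻¹) • m, ?_⟩
    ext w
    have hiff (x : F) : m ⬝ᵥ (x • e + w) = 0 ↔ x = -(m ⬝ᵥ e)⁻¹ * (m ⬝ᵥ w) := by
      rw [dotProduct_add, dotProduct_smul, smul_eq_mul, ← eq_neg_iff_add_eq_zero,
        ← eq_div_iff hm, neg_div, div_eq_inv_mul, neg_mul]
    simp only [moment_apply, hiff, ite_mul, one_mul, zero_mul, sum_ite_eq', mem_univ, if_true,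
      smul_dotProduct, smul_eq_mul]

lemma card_supp_line_mul_card_le {φ : (ι → F) → F} (hφ : φ ∈ hyperplaneSpan F ι)
    (e u v : ι → F) (hs : 2 * #(supp fun x : F => φ (x • e + u)) < Fintype.card F) :
    #(supp fun x : F => φ (x • e + u)) * Fintype.card F
      ≤ #(supp fun x : F => φ (x • e + u)) * (#(supp fun x : F => φ (x • e + u)) - 1)
        + ∑ y : F, #(supp fun x : F => φ (x • e + (y • u + v))) :=
  card_supp_mul_card_le (fun x => φ (x • e + u)) (fun y x => φ (x • e + (y • u + v)))
    fun _ hk => exists_polynomial_of_mem_powerSpan (moment_mem_powerSpan hφ e (by omega)) u v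

end VectorFunctions

/-! ### The Desarguesian plane and its code -/

section Plane

/-- The projective plane over `F`; the same type serves for its points and its lines, a line being
given by the coefficients of its equation. -/
abbrev Plane (F : Type*) [Field F] := ℙ F (Fin 3 → F)

variable {F : Type*} [Field F]

/-- The point (or line) of the plane with homogeneous coordinates `v`, with a junk value at `0`. -/
noncomputable def point (v : Fin 3 → F) : Plane F :=
  if h : v ≠ 0 then Projectivization.mk F v h else Projectivization.mk F 1 one_ne_zero

lemma point_of_ne_zero {v : Fin 3 → F} (hv : v ≠ 0) : point v = Projectivization.mk F v hv :=
  dif_pos hv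

lemma point_rep (R : Plane F) : point R.rep = R := by
  rw [point_of_ne_zero R.rep_nonzero, Projectivization.mk_rep]

lemma point_eq_point_iff {v w : Fin 3 → F} (hv : v ≠ 0) (hw : w ≠ 0) :
    point v = point w ↔ ∃ a : F, a • w = v := by
  rw [point_of_ne_zero hv, point_of_ne_zero hw, Projectivization.mk_eq_mk_iff']

lemma point_smul {v : Fin 3 → F} {a : F} (ha : a ≠ 0) : point (a • v) = point v := by
  by_cases hv : v = 0
  · rw [hv, smul_zero]
  · exact (point_eq_point_iff (smul_ne_zero ha hv) hv).2 ⟨a, rfl⟩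

lemma point_mem_point_iff {v m : Fin 3 → F} (hv : v ≠ 0) (hm : m ≠ 0) :
    point v ∈ point m ↔ m ⬝ᵥ v = 0 := by
  rw [point_of_ne_zero hv, point_of_ne_zero hm, ofField.mem_iff, Projectivization.orthogonal_mk,
    dotProduct_comm]

lemma point_mem_iff {v : Fin 3 → F} (hv : v ≠ 0) (l : Plane F) :
    point v ∈ l ↔ l.rep ⬝ᵥ v = 0 := by
  rw [← point_mem_point_iff hv l.rep_nonzero, point_rep]

lemma mem_iff_rep (R l : Plane F) : R ∈ l ↔ l.rep ⬝ᵥ R.rep = 0 := by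
  rw [← point_mem_iff R.rep_nonzero, point_rep]

lemma left_ne_zero {u v : Fin 3 → F} (huv : LinearIndependent F ![u, v]) : u ≠ 0 := huv.ne_zero 0

lemma right_ne_zero {u v : Fin 3 → F} (huv : LinearIndependent F ![u, v]) : v ≠ 0 := huv.ne_zero 1

lemma point_ne_point {u v : Fin 3 → F} (huv : LinearIndependent F ![u, v]) :
    point u ≠ point v := fun h => by
  obtain ⟨a, ha⟩ := (point_eq_point_iff (left_ne_zero huv) (right_ne_zero huv)).1 h
  exact one_ne_zero (LinearIndependent.pair_iff.1 huv 1 (-a) (by simp [← ha])).1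

lemma linearIndependent_rep {R T : Plane F} (h : R ≠ T) : LinearIndependent F ![R.rep, T.rep] :=
  Projectivization.linearIndependent_pair_iff_ne.2 h

lemma linearIndependent_of_point_ne {u v : Fin 3 → F} (hu : u ≠ 0) (hv : v ≠ 0)
    (h : point u ≠ point v) : LinearIndependent F ![u, v] :=
  (LinearIndependent.pair_iff' hu).2 fun a ha =>
    h ((point_eq_point_iff hv hu).2 ⟨a, ha⟩).symm

lemma smul_add_ne_zero {u v : Fin 3 → F} (huv : LinearIndependent F ![u, v]) (x : F) :
    x • u + v ≠ 0 := fun h =>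
  one_ne_zero (LinearIndependent.pair_iff.1 huv x 1 (by rwa [one_smul])).2

lemma point_smul_add_injective {u v : Fin 3 → F} (huv : LinearIndependent F ![u, v]) :
    Function.Injective fun x : F => point (x • u + v) := fun x y hxy => by
  obtain ⟨a, ha⟩ :=
    (point_eq_point_iff (smul_add_ne_zero huv x) (smul_add_ne_zero huv y)).1 hxy
  obtain ⟨hx, ha1⟩ := LinearIndependent.pair_iff.1 huv (a * y - x) (a - 1)
    (by linear_combination (norm := module) ha)
  linear_combination y * ha1 - hx

lemma point_smul_add_ne {u v : Fin 3 → F} (huv : LinearIndependent F ![u, v]) (x : F) :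
    point (x • u + v) ≠ point u := fun h => by
  obtain ⟨a, ha⟩ := (point_eq_point_iff (smul_add_ne_zero huv x) (left_ne_zero huv)).1 h
  exact one_ne_zero (LinearIndependent.pair_iff.1 huv (x - a) 1
    (by linear_combination (norm := module) (-1 : F) • ha)).2

lemma point_smul_add_mem {u v : Fin 3 → F} (huv : LinearIndependent F ![u, v]) {l : Plane F}
    (hu : point u ∈ l) (hv : point v ∈ l) (x : F) : point (x • u + v) ∈ l := by
  rw [point_mem_iff (left_ne_zero huv)] at hu
  rw [point_mem_iff (right_ne_zero huv)] at hv
  rw [point_mem_iff (smul_add_ne_zero huv x), dotProduct_add, dotProduct_smul]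
  simp_all

lemma smul_add_smul_add_ne_zero {m u v w : Fin 3 → F} (hu : m ⬝ᵥ u = 0) (hv : m ⬝ᵥ v = 0)
    (hw : m ⬝ᵥ w ≠ 0) (x y : F) : x • u + (y • v + w) ≠ 0 := fun h =>
  hw (by simpa [dotProduct_add, hu, hv] using congrArg (m ⬝ᵥ ·) h)

lemma point_affine_injective {m u v w : Fin 3 → F} (huv : LinearIndependent F ![u, v])
    (hu : m ⬝ᵥ u = 0) (hv : m ⬝ᵥ v = 0) (hw : m ⬝ᵥ w ≠ 0) :
    Function.Injective fun z : (_ : F) × F => point (z.2 • u + (z.1 • v + w)) := by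
  rintro ⟨y, x⟩ ⟨y', x'⟩ h
  obtain ⟨a, ha⟩ := (point_eq_point_iff (smul_add_smul_add_ne_zero hu hv hw x y)
    (smul_add_smul_add_ne_zero hu hv hw x' y')).1 h
  have ha1 : a = 1 := by
    have := congrArg (m ⬝ᵥ ·) ha
    simp only [dotProduct_smul, dotProduct_add, hu, hv, smul_eq_mul, mul_zero, zero_add] at this
    exact mul_right_cancel₀ hw (by rw [this, one_mul])
  rw [ha1, one_smul] at ha
  obtain ⟨hx, hy⟩ := LinearIndependent.pair_iff.1 huv (x - x') (y - y')
    (by linear_combination (norm := module) (-1 : F) • ha)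
  rw [sub_eq_zero] at hx hy
  rw [hx, hy]

/-- The code of the plane over `F_p`, spanned by the lines. -/
noncomputable def planeCode (p : ℕ) (F : Type*) [Field F] :
    Submodule (ZMod p) (Plane F → ZMod p) :=
  Submodule.span (ZMod p) (Set.range fun l : Plane F => setVec p {R : Plane F | R ∈ l})

variable {p : ℕ} [CharP F p]

lemma exists_mem_hyperplaneSpan {c : Plane F → ZMod p} (hc : c ∈ planeCode p F) :
    ∃ φ ∈ hyperplaneSpan F (Fin 3),
      ∀ v, v ≠ 0 → φ v = ZMod.castHom (dvd_refl p) F (c (point v)) := by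
  induction hc using Submodule.span_induction with
  | mem c hc =>
    obtain ⟨l, rfl⟩ := hc
    refine ⟨_, Submodule.subset_span ⟨l.rep, rfl⟩, fun v hv => ?_⟩
    simp only [setVec, Set.indicator_apply, Set.mem_ofPred_eq, point_mem_iff hv]
    split_ifs <;> simp
  | zero => exact ⟨0, Submodule.zero_mem _, by simp⟩
  | add c c' _ _ h h' =>
    obtain ⟨φ, hφ, hφc⟩ := h
    obtain ⟨ψ, hψ, hψc⟩ := h'
    exact ⟨φ + ψ, Submodule.add_mem _ hφ hψ, fun v hv => by simp [hφc v hv, hψc v hv]⟩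
  | smul a c _ h =>
    obtain ⟨φ, hφ, hφc⟩ := h
    exact ⟨ZMod.castHom (dvd_refl p) F a • φ, Submodule.smul_mem _ _ hφ,
      fun v hv => by simp [hφc v hv]⟩

noncomputable instance [Finite F] : Fintype (Plane F) := Fintype.ofFinite _

lemma order_plane [Fintype F] : order (Plane F) (Plane F) = Fintype.card F := by
  have hcard := card_points (Plane F) (Plane F)
  rw [← Nat.card_eq_fintype_card, Projectivization.card_of_finrank F (Fin 3 → F) (n := 3) (by simp),
    Nat.card_eq_fintype_card] at hcard
  simp only [sum_range_succ, sum_range_zero, pow_zero, pow_one] at hcard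
  obtain h | h | h := lt_trichotomy (order (Plane F) (Plane F)) (Fintype.card F) <;> nlinarith

lemma filter_mem_line_eq [Fintype F] {u v : Fin 3 → F} (huv : LinearIndependent F ![u, v])
    {l : Plane F} (hu : point u ∈ l) (hv : point v ∈ l) :
    ({R | R ∈ l} : Finset (Plane F)) =
      insert (point u) (univ.image fun x : F => point (x • u + v)) := by
  refine (eq_of_subset_of_card_le (fun R hR => ?_) ?_).symm
  · obtain rfl | hR := mem_insert.1 hR
    · simpa using hu
    · obtain ⟨x, -, rfl⟩ := mem_image.1 hR
      simpa using point_smul_add_mem huv hu hv x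
  · have hline := lineCard_univ (P := Plane F) l
    rw [order_plane, lineCard] at hline
    rw [card_insert_of_notMem, card_image_of_injective _ (point_smul_add_injective huv), card_univ,
      hline]
    simpa using point_smul_add_ne huv

lemma exists_eq_point_smul_add [Finite F] {u v : Fin 3 → F} (huv : LinearIndependent F ![u, v])
    {l R : Plane F} (hu : point u ∈ l) (hv : point v ∈ l) (hR : R ∈ l) (hne : R ≠ point u) :
    ∃ x : F, R = point (x • u + v) := by
  have := Fintype.ofFinite F
  have hmem : R ∈ ({R | R ∈ l} : Finset (Plane F)) := by simpa using hR
  rw [filter_mem_line_eq huv hu hv, mem_insert, mem_image] at hmem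
  obtain ⟨x, -, hx⟩ := hmem.resolve_left hne
  exact ⟨x, hx.symm⟩

lemma one_mem_planeCode [Finite F] : (1 : Plane F → ZMod p) ∈ planeCode p F := by
  have := Fintype.ofFinite F
  have hsum : ∑ l : Plane F, setVec p {R : Plane F | R ∈ l} = 1 := by
    ext R
    have hcard : #{l : Plane F | R ∈ l} = Fintype.card F + 1 := by
      rw [card_lines_through, order_plane]
    have hzero : (Fintype.card F : ZMod p) = 0 :=
      (ZMod.natCast_eq_zero_iff _ _).2 ((CharP.cast_eq_zero_iff F p _).1 (Nat.cast_card_eq_zero F))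
    simp [setVec, Set.indicator_apply, hcard, hzero]
  exact hsum ▸ Submodule.sum_mem _ fun l _ => Submodule.subset_span ⟨l, rfl⟩

lemma lineCard_eq_card_filter [Fintype F] {u v : Fin 3 → F} (huv : LinearIndependent F ![u, v])
    {l : Plane F} (hu : point u ∈ l) (hv : point v ∈ l) {S : Finset (Plane F)} (hS : point u ∉ S) :
    lineCard S l = #{x : F | point (x • u + v) ∈ S} := by
  rw [← card_image_of_injective _ (point_smul_add_injective huv), lineCard]
  congr 1
  ext R
  simp only [mem_filter, mem_image, mem_univ, true_and]
  constructor
  · rintro ⟨hR, hl⟩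
    obtain ⟨x, rfl⟩ := exists_eq_point_smul_add huv hu hv hl (ne_of_mem_of_not_mem hR hS)
    exact ⟨x, hR, rfl⟩
  · rintro ⟨x, hx, rfl⟩
    exact ⟨hx, point_smul_add_mem huv hu hv x⟩

lemma lineCard_add_sum_card_le [Fintype F] {u v w : Fin 3 → F}
    (huv : LinearIndependent F ![u, v]) {l : Plane F} (hu : point u ∈ l) (hv : point v ∈ l)
    (hw : l.rep ⬝ᵥ w ≠ 0) (S : Finset (Plane F)) :
    lineCard S l + ∑ y : F, #{x : F | point (x • u + (y • v + w)) ∈ S} ≤ #S := by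
  rw [point_mem_iff (left_ne_zero huv)] at hu
  rw [point_mem_iff (right_ne_zero huv)] at hv
  rw [← card_filter_add_card_filter_not (s := S) (· ∈ l), lineCard, ← card_sigma]
  refine Nat.add_le_add_left (card_le_card_of_injOn
    (fun z => point (z.2 • u + (z.1 • v + w))) ?_ (point_affine_injective huv hu hv hw).injOn) _
  rintro ⟨y, x⟩ hz
  simp only [coe_sigma, Set.mem_sigma_iff, coe_filter, Set.mem_ofPred_eq, mem_univ, true_and] at hz
  refine mem_coe.2 (mem_filter.2 ⟨hz.2, ?_⟩)
  rw [point_mem_iff (smul_add_smul_add_ne_zero hu hv hw x y)]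
  rw [dotProduct_add, dotProduct_add, dotProduct_smul, dotProduct_smul, hu, hv]
  simpa using hw

lemma exists_frame [Fintype F] {l : Plane F} {S : Finset (Plane F)}
    (hl : lineCard S l ≤ Fintype.card F) :
    ∃ u v w : Fin 3 → F, LinearIndependent F ![u, v] ∧ point u ∈ l ∧ point v ∈ l ∧ point u ∉ S ∧
      l.rep ⬝ᵥ w ≠ 0 := by
  have huniv := lineCard_univ (P := Plane F) l
  rw [order_plane] at huniv
  obtain ⟨R, hRl, hRS⟩ : ∃ R, R ∈ l ∧ R ∉ S := by
    by_contra! hcon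
    have : lineCard univ l ≤ lineCard S l :=
      card_le_card fun R hR => mem_filter.2 ⟨hcon R (mem_filter.1 hR).2, (mem_filter.1 hR).2⟩
    omega
  obtain ⟨T, hT, hne⟩ :=
    exists_mem_ne (show 1 < lineCard univ l from huniv ▸ Nat.succ_lt_succ Fintype.card_pos) R
  obtain ⟨W, hW⟩ := Nondegenerate.exists_point (P := Plane F) l
  refine ⟨R.rep, T.rep, W.rep, linearIndependent_rep hne.symm, ?_, ?_, ?_,
    (mem_iff_rep W l).not.1 hW⟩
  · rwa [point_rep]
  · rw [point_rep]
    exact (mem_filter.1 hT).2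
  · rwa [point_rep]

lemma isLineBounded_planeCode [Finite F] [Fact p.Prime] :
    IsLineBounded (Plane F) (planeCode p F) where
  line_mem l := Submodule.subset_span ⟨l, rfl⟩
  weight_bound c hc l hl := by
    have := Fintype.ofFinite F
    rw [order_plane] at hl ⊢
    obtain ⟨φ, hφ, hφc⟩ := exists_mem_hyperplaneSpan hc
    have hsupp (v : Fin 3 → F) (hv : v ≠ 0) : φ v ≠ 0 ↔ point v ∈ supp c := by
      rw [hφc v hv, mem_supp, Ne, Ne, map_eq_zero]
    obtain ⟨u, v, w, huv, hu, hv, huS, hw⟩ :=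
      exists_frame (S := supp c) (l := l) (by omega)
    have hline : #(supp fun x : F => φ (x • u + v)) = lineCard (supp c) l := by
      rw [lineCard_eq_card_filter huv hu hv huS, supp]
      simp only [hsupp _ (smul_add_ne_zero huv _)]
    have hcount := lineCard_add_sum_card_le huv hu hv hw (supp c)
    rw [point_mem_iff (left_ne_zero huv)] at hu
    rw [point_mem_iff (right_ne_zero huv)] at hv
    have hbound := card_supp_line_mul_card_le hφ u v w (hline ▸ hl)
    simp only [hline, supp.eq_def (fun x : F => φ (x • u + (_ • v + w))),
      hsupp _ (smul_add_smul_add_ne_zero hu hv hw _ _)] at hbound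
    obtain h0 | h0 := Nat.eq_zero_or_pos (lineCard (supp c) l)
    · simp [h0]
    · obtain ⟨t, ht⟩ := Nat.exists_eq_add_of_le' h0
      rw [ht, Nat.add_sub_cancel] at hbound
      rw [ht] at hcount ⊢
      nlinarith

end Plane

/-! ### Unitals that are codewords are Hermitian curves -/

section FieldPolynomials

variable {F : Type*} [Field F]

lemma exists_sum_pow_ne_zero {A : Finset F} {x₀ : F} (hx₀ : x₀ ∈ A) (hne : x₀ ≠ 0) :
    ∃ k, k ≠ 0 ∧ k ≤ #A ∧ ∑ x ∈ A, x ^ k ≠ 0 := by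
  by_contra! hzero
  set g : Polynomial F := ∏ x ∈ A.erase x₀, (Polynomial.X - Polynomial.C x) with hg
  have hdeg : (Polynomial.X * g).natDegree < #A + 1 := by
    rw [Polynomial.natDegree_X_mul (prod_ne_zero_iff.2 fun x _ => Polynomial.X_sub_C_ne_zero x),
      hg, Polynomial.natDegree_finsetProd_X_sub_C_eq_card, card_erase_add_one hx₀]
    exact Nat.lt_succ_self _
  have hsum : ∑ x ∈ A, (Polynomial.X * g).eval x = 0 := by
    simp only [Polynomial.eval_eq_sum_range' hdeg]
    rw [sum_comm]
    refine sum_eq_zero fun k hk => ?_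
    rw [← mul_sum]
    rcases eq_or_ne k 0 with rfl | hk0
    · simp
    · rw [hzero k hk0 (Nat.lt_succ_iff.1 (mem_range.1 hk)), mul_zero]
  rw [sum_eq_single_of_mem x₀ hx₀] at hsum
  · have heval : g.eval x₀ ≠ 0 := by
      rw [hg, Polynomial.eval_prod]
      refine prod_ne_zero_iff.2 fun x hx => ?_
      simpa [sub_ne_zero] using (ne_of_mem_erase hx).symm
    simp [hne, heval] at hsum
  · intro x hx hxx₀
    rw [hg, Polynomial.eval_mul, Polynomial.eval_prod,
      prod_eq_zero (mem_erase.2 ⟨hxx₀, hx⟩) (by simp), mul_zero]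

lemma eq_zero_of_mul_pow_add_mul_add {q : ℕ} (hq : 2 ≤ q) {A : Finset F} (hA : q < #A) {s t u : F}
    (h : ∀ x ∈ A, s * x ^ q + t * x + u = 0) : s = 0 ∧ t = 0 ∧ u = 0 := by
  have hpoly : Polynomial.C s * Polynomial.X ^ q + Polynomial.C t * Polynomial.X
      + Polynomial.C u = 0 := by
    refine Polynomial.eq_zero_of_natDegree_lt_card_of_eval_eq_zero' _ A
      (fun x hx => by simpa using h x hx) (lt_of_le_of_lt ?_ hA)
    compute_degree!
    omega
  have hcoeff (n : ℕ) := congrArg (Polynomial.coeff · n) hpoly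
  simp only [Polynomial.coeff_add, Polynomial.coeff_C_mul, Polynomial.coeff_X_pow,
    Polynomial.coeff_X, Polynomial.coeff_C, Polynomial.coeff_zero] at hcoeff
  have hq0 := hcoeff q
  have h1 := hcoeff 1
  have h0 := hcoeff 0
  simp_all [show q ≠ 0 by omega, show 1 ≠ q by omega, show 0 ≠ q by omega]

lemma coeff_eq_zero_of_sum_eq_zero {f : Polynomial F} {n : ℕ} (hdeg : f.natDegree = n + 1)
    {A : Finset F} (hA : #A = n + 1) (hroot : ∀ x ∈ A, f.eval x = 0) (hsum : ∑ x ∈ A, x = 0) :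
    f.coeff n = 0 := by
  have hf : f ≠ 0 := by
    rintro rfl
    simp at hdeg
  have hroots := Polynomial.roots_eq_of_natDegree_le_card_of_ne_zero hroot (by omega) hf
  have hsplits : f.Splits := Polynomial.splits_iff_card_roots.2 (by rw [hroots, hdeg]; exact hA)
  have hnext := hsplits.nextCoeff_eq_neg_sum_roots_mul_leadingCoeff
  rw [Polynomial.nextCoeff_of_natDegree_pos (by omega), hdeg, hroots, Nat.add_sub_cancel] at hnext
  rw [hnext, sum_val]
  simp [hsum]

end FieldPolynomials

section Conjugation

variable {F : Type*} [Field F] [Fintype F] {q : ℕ}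

lemma exists_eq_ringChar_pow (hF : Fintype.card F = q ^ 2) :
    ∃ n, q = ringChar F ^ n := by
  obtain ⟨n, hp, hn⟩ := FiniteField.card F (ringChar F)
  obtain ⟨m, -, hm⟩ := (Nat.dvd_prime_pow hp).1 ((Dvd.intro_left q rfl : q ∣ q * q).trans
    (by rw [← sq, ← hF, hn]))
  exact ⟨m, hm⟩

lemma exists_ringHom_eq_pow (hF : Fintype.card F = q ^ 2) :
    ∃ σ : F →+* F, ∀ x, σ x = x ^ q := by
  obtain ⟨n, rfl⟩ := exists_eq_ringChar_pow hF
  have : Fact (ringChar F).Prime := ⟨CharP.char_is_prime F _⟩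
  exact ⟨iterateFrobenius F (ringChar F) n, iterateFrobenius_def _ _⟩

lemma add_pow_of_card_eq_sq (hF : Fintype.card F = q ^ 2) (x y : F) :
    (x + y) ^ q = x ^ q + y ^ q := by
  obtain ⟨σ, hσ⟩ := exists_ringHom_eq_pow hF
  simp only [← hσ, map_add]

lemma neg_pow_of_card_eq_sq (hF : Fintype.card F = q ^ 2) (x : F) : (-x) ^ q = -x ^ q := by
  obtain ⟨σ, hσ⟩ := exists_ringHom_eq_pow hF
  simp only [← hσ, map_neg]

lemma pow_pow_of_card_eq_sq (hF : Fintype.card F = q ^ 2) (x : F) : (x ^ q) ^ q = x := by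
  rw [← pow_mul, ← sq, ← hF, FiniteField.pow_card]

lemma cast_eq_zero_of_card_eq_sq (hF : Fintype.card F = q ^ 2) : (q : F) = 0 := by
  have h := Nat.cast_card_eq_zero F
  rw [hF, Nat.cast_pow] at h
  exact pow_eq_zero_iff two_ne_zero |>.1 h

lemma card_filter_pow_eq_le (n : ℕ) (hn : 0 < n) (a : F) : #{x : F | x ^ n = a} ≤ n := by
  refine le_trans (card_le_card fun x hx => ?_)
    ((Multiset.toFinset_card_le _).trans (Polynomial.card_nthRoots n a))
  rw [Multiset.mem_toFinset, Polynomial.mem_nthRoots hn]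
  exact (mem_filter.1 hx).2

/-- A Hermitian curve meets a secant line in a Baer subline, in coordinates centred at the mean of
its parameters. -/
lemma exists_pow_eq_of_mul_pow_eq_zero (hF : Fintype.card F = q ^ 2) (hq : 2 ≤ q) {A : Finset F}
    (hA : #A = q + 1) (hsum : ∑ x ∈ A, x = 0) {a b c d : F} (ha : a ≠ 0)
    (hcurve : ∀ x ∈ A, a * x ^ (q + 1) + b * x ^ q + c * x + d = 0) :
    ∃ δ : F, δ ^ q = δ ∧ ∀ x ∈ A, x ^ (q + 1) = δ := by
  have hb : b = 0 := by
    set f := Polynomial.C a * Polynomial.X ^ (q + 1) + Polynomial.C b * Polynomial.X ^ q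
      + Polynomial.C c * Polynomial.X + Polynomial.C d with hf
    have hdeg : f.natDegree = q + 1 := by
      rw [hf]
      compute_degree!
      simp [ha, show q ≠ 0 by omega]
    have hcoeff := coeff_eq_zero_of_sum_eq_zero hdeg hA
      (fun x hx => by simpa [hf] using hcurve x hx) hsum
    simpa [hf, Polynomial.coeff_X, Polynomial.coeff_C, Polynomial.coeff_X_pow,
      show q ≠ 0 by omega, show 1 ≠ q by omega] using hcoeff
  have hnorm (x : F) (hx : x ∈ A) : x ^ (q + 1) = -(c / a * x + d / a) := by
    have h := hcurve x hx
    rw [hb] at h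
    field_simp
    linear_combination h
  have hconj (x : F) (hx : x ∈ A) : x ^ (q + 1) = -((c / a) ^ q * x ^ q + (d / a) ^ q) := by
    rw [← mul_pow, ← add_pow_of_card_eq_sq hF, ← neg_pow_of_card_eq_sq hF, ← hnorm x hx, pow_succ,
      mul_pow, pow_pow_of_card_eq_sq hF, mul_comm]
  obtain ⟨-, hc, hd⟩ := eq_zero_of_mul_pow_add_mul_add hq (A := A) (by omega)
    (s := (c / a) ^ q) (t := -(c / a)) (u := (d / a) ^ q - d / a)
    fun x hx => by linear_combination hconj x hx - hnorm x hx
  rw [neg_eq_zero] at hc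
  refine ⟨-(d / a), ?_, fun x hx => ?_⟩
  · rw [neg_pow_of_card_eq_sq hF]
    linear_combination -hd
  · rw [hnorm x hx, hc]
    ring

end Conjugation

section Polarity

variable {F : Type*} [Field F]

lemma eq_zero_of_mem_powerSpan {ι : Type*} [Fintype ι] {k : ℕ} {g : (ι → F) → F}
    (hg : g ∈ powerSpan F ι k) {v w : ι → F} (hv : g v = 0) {A : Finset F} (hA : k ≤ #A)
    (hzero : ∀ y ∈ A, g (y • v + w) = 0) : g w = 0 := by
  obtain ⟨f, hdeg, hcoeff, heval⟩ := exists_polynomial_of_mem_powerSpan hg v w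
  have hf : f = 0 := by
    by_contra hne
    have hlt : f.natDegree < k := by
      refine lt_of_le_of_ne hdeg fun hk => hne (Polynomial.leadingCoeff_eq_zero.1 ?_)
      rw [Polynomial.leadingCoeff, hk, hcoeff, hv]
    exact hne (Polynomial.eq_zero_of_natDegree_lt_card_of_eval_eq_zero' f A
      (fun y hy => (heval y).trans (hzero y hy)) (hlt.trans_le hA))
  simpa [hf] using (heval 0).symm

variable [Fintype F]

lemma moment_one_add {ι : Type*} (e w : ι → F) (φ : (ι → F) → F) :
    moment e 1 φ (e + w) = moment e 1 φ w - moment e 0 φ w := by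
  simp only [moment_apply]
  rw [← Equiv.sum_comp (Equiv.subRight (1 : F)), ← sum_sub_distrib]
  refine sum_congr rfl fun x _ => ?_
  have hx : (x - 1) • e + (e + w) = x • e + w := by module
  rw [Equiv.subRight_apply, hx]
  ring

/-- The parameters `x` of the points `x • e + w` of `U`, on the line through `e` and `w`. -/
noncomputable def params (U : Finset (Plane F)) (e w : Fin 3 → F) : Finset F :=
  {x | point (x • e + w) ∈ U}

lemma mem_params {U : Finset (Plane F)} {e w : Fin 3 → F} {x : F} :
    x ∈ params U e w ↔ point (x • e + w) ∈ U := by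
  simp [params]

lemma card_params_add_one {U : Finset (Plane F)} {u v : Fin 3 → F}
    (huv : LinearIndependent F ![u, v]) {l : Plane F} (hu : point u ∈ l) (hv : point v ∈ l)
    (hU : point u ∈ U) : #(params U u v) + 1 = lineCard U l := by
  have herase : params U u v = ({x | point (x • u + v) ∈ U.erase (point u)} : Finset F) := by
    ext x
    simp [params, point_smul_add_ne huv x]
  rw [herase, ← lineCard_eq_card_filter huv hu hv (notMem_erase _ _), lineCard, lineCard,
    filter_erase, card_erase_add_one (mem_filter.2 ⟨hU, hu⟩)]

lemma exists_line_card_params_eq {U : Finset (Plane F)} {e w : Fin 3 → F}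
    (hew : LinearIndependent F ![e, w]) (he : point e ∉ U) :
    ∃ l : Plane F, point e ∈ l ∧ point w ∈ l ∧ #(params U e w) = lineCard U l := by
  obtain ⟨l, ⟨hel, hwl⟩, -⟩ :=
    HasLines.existsUnique_line (Plane F) (Plane F) _ _ (point_ne_point hew)
  exact ⟨l, hel, hwl, (lineCard_eq_card_filter hew hel hwl he).symm⟩

lemma point_mem_of_params_eq {U : Finset (Plane F)} {e w : Fin 3 → F}
    (h : params U e w = {0}) : point w ∈ U := by
  have h0 : (0 : F) ∈ params U e w := h ▸ mem_singleton_self 0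
  simpa [mem_params] using h0

/-- `φ`, a function of the coordinate vector, is the indicator of the unital `U` and lies in the
code of the plane. -/
structure IsUnitalCodeword (q : ℕ) (U : Finset (Plane F)) (φ : (Fin 3 → F) → F) : Prop where
  card_field : Fintype.card F = q ^ 2
  three_le : 3 ≤ q
  isUnital : IsUnital (Plane F) q U
  mem_span : φ ∈ hyperplaneSpan F (Fin 3)
  apply_eq : ∀ v, v ≠ 0 → φ v = if point v ∈ U then 1 else 0

/-- `n` is the polar line of the point `e` off `U`, scaled so that `n ⬝ᵥ w` is the sum of the
parameters, relative to `e` and `w`, of the points of `U` on the line `ew`. -/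
structure IsPolar (U : Finset (Plane F)) (φ : (Fin 3 → F) → F) (e n : Fin 3 → F) : Prop where
  notMem : point e ∉ U
  moment_one : ∀ w, moment e 1 φ w = n ⬝ᵥ w
  dotProduct_self : n ⬝ᵥ e = -1

namespace IsPolar

variable {U : Finset (Plane F)} {φ : (Fin 3 → F) → F} {e n w : Fin 3 → F}

lemma left_ne_zero (hn : IsPolar U φ e n) : e ≠ 0 := by
  rintro rfl
  simpa using hn.dotProduct_self

lemma right_ne_zero (hn : IsPolar U φ e n) : n ≠ 0 := by
  rintro rfl
  simpa using hn.dotProduct_self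

lemma point_notMem (hn : IsPolar U φ e n) : point e ∉ point n := by
  rw [point_mem_point_iff hn.left_ne_zero hn.right_ne_zero, hn.dotProduct_self]
  exact neg_ne_zero.2 one_ne_zero

lemma linearIndependent (hn : IsPolar U φ e n) (hw : w ≠ 0) (hnw : n ⬝ᵥ w = 0) :
    LinearIndependent F ![e, w] :=
  linearIndependent_of_point_ne hn.left_ne_zero hw fun h =>
    hn.point_notMem (h ▸ (point_mem_point_iff hw hn.right_ne_zero).2 hnw)

lemma eq_zero_of_smul_add_eq_zero (hn : IsPolar U φ e n) {u v : Fin 3 → F}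
    (huv : LinearIndependent F ![u, v]) (hu : n ⬝ᵥ u = 0) (hv : n ⬝ᵥ v = 0) {x y z : F}
    (h : x • e + (y • u + z • v) = 0) : x = 0 ∧ y = 0 ∧ z = 0 := by
  have hx : x = 0 := by
    simpa [hu, hv, hn.dotProduct_self] using congrArg (n ⬝ᵥ ·) h
  rw [hx, zero_smul, zero_add] at h
  exact ⟨hx, LinearIndependent.pair_iff.1 huv y z h⟩

end IsPolar

namespace IsUnitalCodeword

variable {q : ℕ} {U : Finset (Plane F)} {φ : (Fin 3 → F) → F} {e n w : Fin 3 → F}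

lemma moment_mem (hU : IsUnitalCodeword q U φ) (e : Fin 3 → F) {k : ℕ} (hk : k ≤ q + 1) :
    moment e k φ ∈ powerSpan F (Fin 3) k := by
  refine moment_mem_powerSpan hU.mem_span e ?_
  have : 3 ≤ q := hU.three_le
  have : 3 * q ≤ q ^ 2 := by nlinarith
  rw [hU.card_field]
  omega

lemma moment_eq (hU : IsUnitalCodeword q U φ) (hew : LinearIndependent F ![e, w]) (k : ℕ) :
    moment e k φ w = ∑ x ∈ params U e w, x ^ k := by
  rw [moment_apply, params, sum_filter]
  refine sum_congr rfl fun x _ => ?_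
  rw [hU.apply_eq _ (smul_add_ne_zero hew x), ite_mul, one_mul, zero_mul]

lemma card_params (hU : IsUnitalCodeword q U φ) (hew : LinearIndependent F ![e, w])
    (he : point e ∉ U) : #(params U e w) = 1 ∨ #(params U e w) = q + 1 := by
  obtain ⟨l, -, -, hl⟩ := exists_line_card_params_eq hew he
  exact hl ▸ hU.isUnital.lineCard_eq l

lemma moment_zero (hU : IsUnitalCodeword q U φ) (hew : LinearIndependent F ![e, w])
    (he : point e ∉ U) : moment e 0 φ w = 1 := by
  rw [hU.moment_eq hew]
  obtain h | h := hU.card_params hew he <;> simp [h, cast_eq_zero_of_card_eq_sq hU.card_field]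

lemma exists_isPolar (hU : IsUnitalCodeword q U φ) (he : e ≠ 0) (heU : point e ∉ U) :
    ∃ n, IsPolar U φ e n := by
  obtain ⟨n, hn⟩ := exists_dotProduct_of_mem_powerSpan_one (hU.moment_mem e (k := 1) (by omega))
  obtain ⟨w, hew⟩ := exists_linearIndependent_pair_of_one_lt_finrank (R := F)
    (by rw [Module.finrank_fin_fun]; norm_num) he
  refine ⟨n, heU, hn, ?_⟩
  have hshift := moment_one_add e w φ
  rw [hn, hn, hU.moment_zero hew heU, dotProduct_add] at hshift
  linear_combination hshift

lemma params_eq_singleton (hU : IsUnitalCodeword q U φ) (hn : IsPolar U φ e n) (hw : w ≠ 0)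
    (hnw : n ⬝ᵥ w = 0) (hcard : #(params U e w) = 1) : params U e w = {0} := by
  have hsum := hU.moment_eq (hn.linearIndependent hw hnw) 1
  obtain ⟨x, hx⟩ := card_eq_one.1 hcard
  rw [hn.moment_one, hnw, hx, sum_singleton, pow_one] at hsum
  rw [hx, ← hsum]

lemma params_eq_of_tangent (hU : IsUnitalCodeword q U φ) (hn : IsPolar U φ e n) {t : Plane F}
    (ht : lineCard U t = 1) (het : point e ∈ t) (hw : w ≠ 0) (hwt : point w ∈ t)
    (hnw : n ⬝ᵥ w = 0) : params U e w = {0} := by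
  refine hU.params_eq_singleton hn hw hnw ?_
  rw [← ht, lineCard_eq_card_filter (hn.linearIndependent hw hnw) het hwt hn.notMem, params]

/-- Each of the `q + 1` tangents through `e` touches `U` at its intersection with the polar line,
which therefore is a secant all of whose points on `U` arise in this way. -/
lemma lineCard_polar_and_params_eq (hU : IsUnitalCodeword q U φ) (hn : IsPolar U φ e n) :
    lineCard U (point n) = q + 1 ∧
      ∀ w, w ≠ 0 → point w ∈ U → n ⬝ᵥ w = 0 → params U e w = {0} := by
  let T : Finset (Plane F) := {t | point e ∈ t ∧ lineCard U t = 1}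
  have hfoot (t : Plane F) (ht : t ∈ T) : ∃ R : Plane F, R ∈ t ∧ R ∈ point n :=
    (HasPoints.existsUnique_point (Plane F) (Plane F) t (point n)
      (fun h => hn.point_notMem (h ▸ (mem_filter.1 ht).2.1))).exists
  choose! f hft hfn using hfoot
  have hparams (t : Plane F) (ht : t ∈ T) (w : Fin 3 → F) (hw : w ≠ 0) (hwt : point w = f t) :
      params U e w = {0} :=
    hU.params_eq_of_tangent hn (mem_filter.1 ht).2.2 (mem_filter.1 ht).2.1 hw (hwt ▸ hft t ht)
      ((point_mem_point_iff hw hn.right_ne_zero).1 (hwt ▸ hfn t ht))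
  have hinj : Set.InjOn f T := fun t ht t' ht' h =>
    (Nondegenerate.eq_or_eq (hft t ht) (mem_filter.1 ht).2.1 (h ▸ hft t' ht')
      (mem_filter.1 ht').2.1).resolve_left fun hfe => hn.point_notMem (hfe ▸ hfn t ht)
  have hsub : T.image f ⊆ ({R ∈ U | R ∈ point n} : Finset (Plane F)) := by
    refine image_subset_iff.2 fun t ht => mem_filter.2 ⟨?_, hfn t ht⟩
    have := point_mem_of_params_eq (hparams t ht (f t).rep (f t).rep_nonzero (point_rep _))
    rwa [point_rep] at this
  have hcard : #(T.image f) = q + 1 := by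
    rw [card_image_of_injOn hinj, hU.isUnital.card_tangents_of_notMem _ hn.notMem]
  have hpolar : lineCard U (point n) = q + 1 :=
    (hU.isUnital.lineCard_eq (point n)).resolve_left fun h => by
      have := hcard ▸ card_le_card hsub
      have := hU.three_le
      rw [lineCard] at h
      omega
  refine ⟨hpolar, fun w hw hwU hnw => ?_⟩
  have hmem : point w ∈ T.image f := by
    rw [eq_of_subset_of_card_le hsub (hcard ▸ hpolar.le)]
    exact mem_filter.2 ⟨hwU, (point_mem_point_iff hw hn.right_ne_zero).2 hnw⟩
  obtain ⟨t, ht, htw⟩ := mem_image.1 hmem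
  exact hparams t ht w hw htw.symm

lemma lineCard_polar (hU : IsUnitalCodeword q U φ) (hn : IsPolar U φ e n) :
    lineCard U (point n) = q + 1 :=
  (hU.lineCard_polar_and_params_eq hn).1

lemma moment_eq_zero_of_mem (hU : IsUnitalCodeword q U φ) (hn : IsPolar U φ e n) (hw : w ≠ 0)
    (hwU : point w ∈ U) (hnw : n ⬝ᵥ w = 0) {k : ℕ} (hk : k ≠ 0) : moment e k φ w = 0 := by
  rw [hU.moment_eq (hn.linearIndependent hw hnw),
    (hU.lineCard_polar_and_params_eq hn).2 w hw hwU hnw, sum_singleton, zero_pow hk]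

lemma exists_pair_polar (hU : IsUnitalCodeword q U φ) (hn : IsPolar U φ e n) :
    ∃ u v : Fin 3 → F, LinearIndependent F ![u, v] ∧ point u ∈ U ∧ point v ∈ U ∧
      n ⬝ᵥ u = 0 ∧ n ⬝ᵥ v = 0 := by
  have hlt : 1 < lineCard U (point n) := by
    rw [hU.lineCard_polar hn]
    have := hU.three_le
    omega
  obtain ⟨R, hR, T, hT, hRT⟩ := one_lt_card.1 hlt
  obtain ⟨hRU, hRn⟩ := mem_filter.1 hR
  obtain ⟨hTU, hTn⟩ := mem_filter.1 hT
  refine ⟨R.rep, T.rep, linearIndependent_rep hRT, ?_, ?_, ?_, ?_⟩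
  · rwa [point_rep]
  · rwa [point_rep]
  · rwa [← point_mem_point_iff R.rep_nonzero hn.right_ne_zero, point_rep]
  · rwa [← point_mem_point_iff T.rep_nonzero hn.right_ne_zero, point_rep]

lemma moment_eq_zero (hU : IsUnitalCodeword q U φ) (hn : IsPolar U φ e n) (hw : w ≠ 0)
    (hnw : n ⬝ᵥ w = 0) {k : ℕ} (hk : k ≠ 0) (hkq : k ≤ q) : moment e k φ w = 0 := by
  by_cases hwU : point w ∈ U
  · exact hU.moment_eq_zero_of_mem hn hw hwU hnw hk
  obtain ⟨u, v, huv, huU, -, hnu, -⟩ := hU.exists_pair_polar hn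
  have hu := QuasiHermitian.left_ne_zero huv
  have huw : LinearIndependent F ![u, w] :=
    linearIndependent_of_point_ne hu hw (ne_of_mem_of_not_mem huU hwU)
  have hcard := card_params_add_one huw ((point_mem_point_iff hu hn.right_ne_zero).2 hnu)
    ((point_mem_point_iff hw hn.right_ne_zero).2 hnw) huU
  rw [hU.lineCard_polar hn] at hcard
  refine eq_zero_of_mem_powerSpan (hU.moment_mem e (by omega))
    (hU.moment_eq_zero_of_mem hn hu huU hnu hk) (A := params U u w) (by omega) fun y hy => ?_
  exact hU.moment_eq_zero_of_mem hn (smul_add_ne_zero huw y) (mem_params.1 hy)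
    (by simp [hnu, hnw]) hk

lemma moment_ne_zero (hU : IsUnitalCodeword q U φ) (hn : IsPolar U φ e n) (hw : w ≠ 0)
    (hnw : n ⬝ᵥ w = 0) (hcard : #(params U e w) = q + 1) : moment e (q + 1) φ w ≠ 0 := by
  have hq := hU.three_le
  obtain ⟨x, hx, hx0⟩ := exists_mem_ne (show 1 < #(params U e w) by omega) 0
  obtain ⟨k, hk0, hk, hne⟩ := exists_sum_pow_ne_zero hx hx0
  rw [← hU.moment_eq (hn.linearIndependent hw hnw)] at hne
  obtain rfl | hkq : k = q + 1 ∨ k ≤ q := by omega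
  · exact hne
  · exact absurd (hU.moment_eq_zero hn hw hnw hk0 hkq) hne

lemma exists_tangent (hU : IsUnitalCodeword q U φ) {R : Plane F} (hR : R ∈ U) :
    ∃ t : Plane F, R ∈ t ∧ lineCard U t = 1 := by
  obtain ⟨t, ht⟩ := card_eq_one.1 (hU.isUnital.card_tangents_of_mem R hR)
  have htR : t ∈ ({l | R ∈ l ∧ lineCard U l = 1} : Finset (Plane F)) := ht ▸ mem_singleton_self t
  exact ⟨t, (mem_filter.1 htR).2⟩

lemma mem_polar_of_tangent (hU : IsUnitalCodeword q U φ) (hn : IsPolar U φ e n) {R t : Plane F}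
    (ht : lineCard U t = 1) (het : point e ∈ t) (hR : R ∈ U) (hRt : R ∈ t) : R ∈ point n := by
  obtain ⟨T, hTt, hTn⟩ := (HasPoints.existsUnique_point (Plane F) (Plane F) t (point n)
    (fun h => hn.point_notMem (h ▸ het))).exists
  have hparams := hU.params_eq_of_tangent hn ht het T.rep_nonzero (by rwa [point_rep])
    (by rwa [← point_mem_point_iff T.rep_nonzero hn.right_ne_zero, point_rep])
  have hTU := point_mem_of_params_eq hparams
  rw [point_rep] at hTU
  rwa [eq_of_lineCard_eq_one ht hR hRt hTU hTt]

lemma exists_pole (hU : IsUnitalCodeword q U φ) {m : Plane F} (hm : lineCard U m = q + 1) :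
    ∃ e n : Fin 3 → F, IsPolar U φ e n ∧ point n = m := by
  have hlt : 1 < lineCard U m := by
    have := hU.three_le
    omega
  obtain ⟨R, hR, T, hT, hRT⟩ := one_lt_card.1 hlt
  obtain ⟨hRU, hRm⟩ := mem_filter.1 hR
  obtain ⟨hTU, hTm⟩ := mem_filter.1 hT
  obtain ⟨s, hRs, hs⟩ := hU.exists_tangent hRU
  obtain ⟨t, hTt, ht⟩ := hU.exists_tangent hTU
  have hst : s ≠ t := by
    rintro rfl
    exact hRT (eq_of_lineCard_eq_one hs hRU hRs hTU hTt)
  obtain ⟨E, hEs, hEt⟩ := (HasPoints.existsUnique_point (Plane F) (Plane F) s t hst).exists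
  have hEU : E ∉ U := fun hEU =>
    hRT ((eq_of_lineCard_eq_one hs hRU hRs hEU hEs).trans
      (eq_of_lineCard_eq_one ht hTU hTt hEU hEt).symm)
  rw [← point_rep E] at hEs hEt hEU
  obtain ⟨n, hn⟩ := hU.exists_isPolar E.rep_nonzero hEU
  exact ⟨E.rep, n, hn, (Nondegenerate.eq_or_eq (hU.mem_polar_of_tangent hn hs hEs hRU hRs)
    (hU.mem_polar_of_tangent hn ht hEt hTU hTt) hRm hTm).resolve_left hRT⟩

end IsUnitalCodeword

end Polarity

section Hermitian

variable {F : Type*} [Field F] [Fintype F] {q : ℕ}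

lemma sesqForm_smul_add_smul {ι : Type*} [Fintype ι] (hF : Fintype.card F = q ^ 2)
    (N : Matrix ι ι F) (u v : ι → F) (x y : F) :
    sesqForm q N (x • u + y • v) (x • u + y • v) = sesqForm q N u u * x ^ (q + 1)
      + sesqForm q N v u * (y * x ^ q) + sesqForm q N u v * (x * y ^ q)
      + sesqForm q N v v * y ^ (q + 1) := by
  have hpow : (x • u + y • v) ^ q = x ^ q • u ^ q + y ^ q • v ^ q := by
    ext i
    simp [add_pow_of_card_eq_sq hF, mul_pow]
  simp only [sesqForm, hpow, mulVec_add, mulVec_smul, dotProduct_add, add_dotProduct,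
    dotProduct_smul, smul_dotProduct, smul_eq_mul]
  ring

lemma sesqForm_swap_eq_pow {ι : Type*} [Fintype ι] (hF : Fintype.card F = q ^ 2) (hq : 2 ≤ q)
    {N : Matrix ι ι F} {u v : ι → F} (hu : sesqForm q N u u = 0) (hv : sesqForm q N v v = 0)
    (hfix : ∀ y : F, sesqForm q N (y • u + v) (y • u + v) ^ q
      = sesqForm q N (y • u + v) (y • u + v)) :
    sesqForm q N u v = sesqForm q N v u ^ q := by
  have hcard : q < #(univ : Finset F) := by
    rw [card_univ, hF]
    nlinarith
  obtain ⟨-, h, -⟩ := eq_zero_of_mul_pow_add_mul_add hq hcard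
    (s := sesqForm q N u v ^ q - sesqForm q N v u) (t := sesqForm q N v u ^ q - sesqForm q N u v)
    (u := 0) fun y _ => by
      have hy := hfix y
      rw [← one_smul F v, sesqForm_smul_add_smul hF, hu, hv] at hy
      simp only [zero_mul, one_pow, mul_one, one_mul, zero_add, add_zero,
        add_pow_of_card_eq_sq hF, mul_pow, pow_pow_of_card_eq_sq hF] at hy
      linear_combination hy
  exact (sub_eq_zero.1 h).symm

namespace IsUnitalCodeword

variable {U : Finset (Plane F)} {φ : (Fin 3 → F) → F} {e n w : Fin 3 → F}

lemma exists_sesqForm (hU : IsUnitalCodeword q U φ) (e : Fin 3 → F) :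
    ∃ N, ∀ w, moment e (q + 1) φ w = sesqForm q N w w := by
  obtain ⟨k, hk⟩ := exists_eq_ringChar_pow hU.card_field
  have : Fact (ringChar F).Prime := ⟨CharP.char_is_prime F _⟩
  exact exists_sesqForm_of_mem_powerSpan hk (hU.moment_mem e le_rfl)

lemma point_mem_iff_moment_eq_zero (hU : IsUnitalCodeword q U φ) (hn : IsPolar U φ e n)
    (hw : w ≠ 0) (hnw : n ⬝ᵥ w = 0) : point w ∈ U ↔ moment e (q + 1) φ w = 0 := by
  refine ⟨fun h => hU.moment_eq_zero_of_mem hn hw h hnw (by omega), fun h => ?_⟩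
  obtain hcard | hcard := hU.card_params (hn.linearIndependent hw hnw) hn.notMem
  · exact point_mem_of_params_eq (hU.params_eq_singleton hn hw hnw hcard)
  · exact absurd h (hU.moment_ne_zero hn hw hnw hcard)

/-- The pole `e'` of the secant line `ew` supplies the equation of the curve cut out on it by
`U`. -/
lemma exists_curve (hU : IsUnitalCodeword q U φ) (hew : LinearIndependent F ![e, w])
    (he : point e ∉ U) (hcard : #(params U e w) = q + 1) :
    ∃ a b c d : F, a ≠ 0 ∧
      ∀ x ∈ params U e w, a * x ^ (q + 1) + b * x ^ q + c * x + d = 0 := by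
  have hq := hU.three_le
  obtain ⟨m, hem, hwm, hm⟩ := exists_line_card_params_eq hew he
  obtain ⟨e', n, hn, rfl⟩ := hU.exists_pole (hm.symm.trans hcard)
  obtain ⟨N, hN⟩ := hU.exists_sesqForm e'
  rw [point_mem_point_iff (left_ne_zero hew) hn.right_ne_zero] at hem
  rw [point_mem_point_iff (right_ne_zero hew) hn.right_ne_zero] at hwm
  have hmem (x : F) : x ∈ params U e w ↔ sesqForm q N e e * x ^ (q + 1)
      + sesqForm q N w e * x ^ q + sesqForm q N e w * x + sesqForm q N w w = 0 := by
    rw [mem_params, hU.point_mem_iff_moment_eq_zero hn (smul_add_ne_zero hew x)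
      (by simp [hem, hwm]), hN]
    nth_rw 1 2 [← one_smul F w]
    rw [sesqForm_smul_add_smul hU.card_field]
    simp
  refine ⟨_, _, _, _, fun ha => ?_, fun x hx => (hmem x).1 hx⟩
  obtain ⟨hs, ht, hu⟩ := eq_zero_of_mul_pow_add_mul_add (q := q) (by omega) (by omega)
    fun x (hx : x ∈ params U e w) => by simpa [ha] using (hmem x).1 hx
  have huniv : params U e w = univ := eq_univ_of_forall fun x => by simp [hmem, ha, hs, ht, hu]
  rw [huniv, card_univ, hU.card_field] at hcard
  nlinarith

lemma pow_eq_moment (hU : IsUnitalCodeword q U φ) (hn : IsPolar U φ e n) (hw : w ≠ 0)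
    (hnw : n ⬝ᵥ w = 0) (hcard : #(params U e w) = q + 1) :
    moment e (q + 1) φ w ^ q = moment e (q + 1) φ w ∧
      ∀ x ∈ params U e w, x ^ (q + 1) = moment e (q + 1) φ w := by
  have hq := hU.three_le
  have hew := hn.linearIndependent hw hnw
  obtain ⟨a, b, c, d, ha, hcurve⟩ := hU.exists_curve hew hn.notMem hcard
  have hsum : ∑ x ∈ params U e w, x = 0 := by
    simpa [hn.moment_one, hnw] using (hU.moment_eq hew 1).symm
  obtain ⟨δ, hδ, hpow⟩ :=
    exists_pow_eq_of_mul_pow_eq_zero hU.card_field (by omega) hcard hsum ha hcurve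
  have hmoment : moment e (q + 1) φ w = δ := by
    rw [hU.moment_eq hew, sum_congr rfl hpow, sum_const, hcard, nsmul_eq_mul, Nat.cast_add,
      cast_eq_zero_of_card_eq_sq hU.card_field, Nat.cast_one, zero_add, one_mul]
  exact hmoment ▸ ⟨hδ, hpow⟩

lemma moment_pow_and_mem_params_iff (hU : IsUnitalCodeword q U φ) (hn : IsPolar U φ e n)
    (hw : w ≠ 0) (hnw : n ⬝ᵥ w = 0) :
    moment e (q + 1) φ w ^ q = moment e (q + 1) φ w ∧
      ∀ x, x ∈ params U e w ↔ x ^ (q + 1) = moment e (q + 1) φ w := by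
  have hq := hU.three_le
  have hew := hn.linearIndependent hw hnw
  obtain hcard | hcard := hU.card_params hew hn.notMem
  · have hparams := hU.params_eq_singleton hn hw hnw hcard
    have hzero : moment e (q + 1) φ w = 0 := by simp [hU.moment_eq hew, hparams]
    rw [hzero, hparams]
    exact ⟨zero_pow (by omega), fun x => by simp⟩
  · obtain ⟨hfix, hpow⟩ := hU.pow_eq_moment hn hw hnw hcard
    have heq : params U e w = ({x | x ^ (q + 1) = moment e (q + 1) φ w} : Finset F) :=
      eq_of_subset_of_card_le (fun x hx => mem_filter.2 ⟨mem_univ x, hpow x hx⟩)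
        ((card_filter_pow_eq_le _ q.succ_pos _).trans hcard.ge)
    exact ⟨hfix, fun x => by rw [heq, mem_filter, and_iff_right (mem_univ x)]⟩

lemma exists_notMem (hU : IsUnitalCodeword q U φ) : ∃ R, R ∉ U := by
  by_contra! h
  obtain ⟨l⟩ : Nonempty (Plane F) := inferInstance
  have hl := hU.isUnital.lineCard_eq l
  have hq := hU.three_le
  rw [eq_univ_of_forall h, lineCard_univ, order_plane, hU.card_field] at hl
  obtain hl | hl := hl <;> nlinarith

lemma exists_moment_eq (hU : IsUnitalCodeword q U φ) (hn : IsPolar U φ e n) :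
    ∃ (u v : Fin 3 → F) (b : F), LinearIndependent F ![u, v] ∧ n ⬝ᵥ u = 0 ∧ n ⬝ᵥ v = 0 ∧ b ≠ 0 ∧
      ∀ y z, moment e (q + 1) φ (y • u + z • v) = b * (z * y ^ q) + b ^ q * (y * z ^ q) := by
  have hq := hU.three_le
  obtain ⟨u, v, huv, huU, hvU, hnu, hnv⟩ := hU.exists_pair_polar hn
  have hu := left_ne_zero huv
  have hv := right_ne_zero huv
  have hnuv (y : F) : n ⬝ᵥ (y • u + v) = 0 := by simp [hnu, hnv]
  obtain ⟨N, hN⟩ := hU.exists_sesqForm e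
  have hNu : sesqForm q N u u = 0 := hN u ▸ hU.moment_eq_zero_of_mem hn hu huU hnu (by omega)
  have hNv : sesqForm q N v v = 0 := hN v ▸ hU.moment_eq_zero_of_mem hn hv hvU hnv (by omega)
  have hswap := sesqForm_swap_eq_pow hU.card_field (by omega) hNu hNv fun y => by
    simpa only [hN] using
      (hU.moment_pow_and_mem_params_iff hn (smul_add_ne_zero huv y) (hnuv y)).1
  have hform (y z : F) : moment e (q + 1) φ (y • u + z • v)
      = sesqForm q N v u * (z * y ^ q) + sesqForm q N v u ^ q * (y * z ^ q) := by
    rw [hN, sesqForm_smul_add_smul hU.card_field, hNu, hNv, hswap]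
    ring
  refine ⟨u, v, _, huv, hnu, hnv, fun hb => ?_, hform⟩
  have huniv : params U u v = univ := eq_univ_of_forall fun y => by
    have hzero := hform y 1
    rw [one_smul, hb, zero_pow (by omega), zero_mul, zero_mul, add_zero] at hzero
    exact (mem_params).2
      ((hU.point_mem_iff_moment_eq_zero hn (smul_add_ne_zero huv y) (hnuv y)).2 hzero)
  have hcard := card_params_add_one huv ((point_mem_point_iff hu hn.right_ne_zero).2 hnu)
    ((point_mem_point_iff hv hn.right_ne_zero).2 hnv) huU
  rw [huniv, card_univ, hU.card_field, hU.lineCard_polar hn] at hcard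
  nlinarith

lemma exists_coordinates (hU : IsUnitalCodeword q U φ) :
    ∃ (e u v : Fin 3 → F) (b : F), b ≠ 0 ∧
      (∀ x y z : F, x • e + (y • u + z • v) = 0 → x = 0 ∧ y = 0 ∧ z = 0) ∧
      ∀ x y z : F, ¬ (x = 0 ∧ y = 0 ∧ z = 0) → (point (x • e + (y • u + z • v)) ∈ U ↔
        x ^ (q + 1) = b * (z * y ^ q) + b ^ q * (y * z ^ q)) := by
  obtain ⟨R, hR⟩ := hU.exists_notMem
  obtain ⟨n, hn⟩ := hU.exists_isPolar R.rep_nonzero (by rwa [point_rep])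
  obtain ⟨u, v, b, huv, hnu, hnv, hb, hform⟩ := hU.exists_moment_eq hn
  refine ⟨R.rep, u, v, b, hb,
    fun x y z h => hn.eq_zero_of_smul_add_eq_zero huv hnu hnv h, fun x y z hxyz => ?_⟩
  rw [← hform]
  by_cases hyz : y • u + z • v = 0
  · have hx : x ≠ 0 := fun hx => hxyz ⟨hx, LinearIndependent.pair_iff.1 huv y z hyz⟩
    have hmoment := hform y z
    obtain ⟨rfl, rfl⟩ := LinearIndependent.pair_iff.1 huv y z hyz
    rw [hmoment, hyz, add_zero, point_smul hx, point_rep]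
    simp [hR, hx]
  · rw [← mem_params, (hU.moment_pow_and_mem_params_iff hn hyz (by simp [hnu, hnv])).2]

lemma exists_hermitian (hU : IsUnitalCodeword q U φ) :
    ∃ g : (Fin 3 → F) →ₗ[F] (Fin 3 → F), Function.Injective g ∧
      ∃ A : Matrix (Fin 3) (Fin 3) F, IsUnit A.det ∧ Aᵀ = A.map (· ^ q) ∧
        ∀ y, y ≠ 0 → (point (g y) ∈ U ↔ ∑ i, ∑ j, y i * A i j * y j ^ q = 0) := by
  have hq : q ≠ 0 := by
    have := hU.three_le
    omega
  obtain ⟨e, u, v, b, hb, hindep, hmem⟩ := hU.exists_coordinates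
  let g : (Fin 3 → F) →ₗ[F] (Fin 3 → F) := Fintype.linearCombination F ![e, u, v]
  have hg (y) : g y = y 0 • e + (y 1 • u + y 2 • v) := by
    simp [g, Fintype.linearCombination_apply, Fin.sum_univ_three, add_assoc]
  have hzero (y : Fin 3 → F) (hy : y 0 = 0 ∧ y 1 = 0 ∧ y 2 = 0) : y = 0 := by
    ext i
    fin_cases i
    exacts [hy.1, hy.2.1, hy.2.2]
  refine ⟨g, (injective_iff_map_eq_zero g).2 fun y hy => hzero y (hindep _ _ _ (hg y ▸ hy)),
    !![1, 0, 0; 0, 0, -b ^ q; 0, -b, 0], ?_, ?_, fun y hy => ?_⟩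
  · simp [isUnit_iff_ne_zero, det_fin_three, hb, hq]
  · ext i j
    fin_cases i <;> fin_cases j <;>
      simp [hq, neg_pow_of_card_eq_sq hU.card_field, pow_pow_of_card_eq_sq hU.card_field]
  · rw [hg, hmem _ _ _ (mt (hzero y) hy), ← sub_eq_zero]
    refine Eq.congr_left ?_
    simp [Fin.sum_univ_three]
    ring

end IsUnitalCodeword

end Hermitian

/-! ### Plane sections in higher-dimensional projective space -/

section PointMap

variable {F : Type} [Field F] {n : ℕ} {M : Type*} [AddCommGroup M] [Module F M]

lemma exists_eq_span_singleton (P : ProjPoint F n) :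
    ∃ v : Fin n → F, v ≠ 0 ∧ P.1 = Submodule.span F {v} := by
  refine ⟨(Projectivization.mk'' P.1 P.2).rep, Projectivization.rep_nonzero _, ?_⟩
  rw [← Projectivization.submodule_eq, Projectivization.submodule_mk'']

lemma mem_pointsIn_iff {P : ProjPoint F n} {v : Fin n → F} (hP : P.1 = Submodule.span F {v})
    (S : Submodule F (Fin n → F)) : P ∈ pointsIn F n S ↔ v ∈ S := by
  rw [pointsIn, Set.mem_ofPred_eq, hP, Submodule.span_singleton_le_iff_mem]

lemma pointsIn_inf (S T : Submodule F (Fin n → F)) :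
    pointsIn F n (S ⊓ T) = pointsIn F n S ∩ pointsIn F n T := by
  ext P
  exact le_inf_iff (α := Submodule F (Fin n → F))

/-- The map on points induced by an injective linear map; used to give coordinates to the
subspaces of a projective space. -/
noncomputable def pointMap (e : M →ₗ[F] (Fin n → F)) (he : Function.Injective e) (R : ℙ F M) :
    ProjPoint F n :=
  ⟨(R.map e he).submodule, Projectivization.finrank_submodule _⟩

variable (e : M →ₗ[F] (Fin n → F)) (he : Function.Injective e)

lemma coe_pointMap_mk {v : M} (hv : v ≠ 0) :
    (pointMap e he (Projectivization.mk F v hv)).1 = Submodule.span F {e v} := rfl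

lemma pointMap_mem_pointsIn (R : ℙ F M) (S : Submodule F (Fin n → F)) :
    pointMap e he R ∈ pointsIn F n S ↔ e R.rep ∈ S := by
  nth_rw 1 [← R.mk_rep]
  exact mem_pointsIn_iff (coe_pointMap_mk e he R.rep_nonzero) S

lemma pointMap_injective : Function.Injective (pointMap e he) := fun _ _ h =>
  Projectivization.map_injective e he
    (Projectivization.submodule_injective (congrArg Subtype.val h))

lemma range_pointMap : Set.range (pointMap e he) = pointsIn F n (LinearMap.range e) := by
  refine Set.Subset.antisymm (Set.range_subset_iff.2 fun R =>
    (pointMap_mem_pointsIn e he R _).2 ⟨_, rfl⟩) fun P hP => ?_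
  obtain ⟨v, hv, hPv⟩ := exists_eq_span_singleton P
  obtain ⟨y, rfl⟩ := (mem_pointsIn_iff hPv _).1 hP
  have hy : y ≠ 0 := fun hy => hv (by rw [hy, map_zero])
  exact ⟨Projectivization.mk F y hy, Subtype.ext hPv.symm⟩

lemma secant_eq_ncard_preimage (V : Set (ProjPoint F n)) {S : Submodule F (Fin n → F)}
    (hS : S ≤ LinearMap.range e) :
    secant F n V S = (pointMap e he ⁻¹' (V ∩ pointsIn F n S)).ncard := by
  refine (Set.ncard_preimage_of_injective_subset_range (pointMap_injective e he) ?_).symm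
  rw [range_pointMap]
  exact fun P hP => le_trans hP.2 hS

end PointMap

section Quotient

variable {F : Type} [Field F] {n : ℕ}

lemma existsUnique_pointsIn_comap_mkQ {W : Submodule F (Fin n → F)} {P : ProjPoint F n}
    (hP : P ∉ pointsIn F n W) :
    ∃! y : ℙ F ((Fin n → F) ⧸ W), P ∈ pointsIn F n (y.submodule.comap W.mkQ) := by
  obtain ⟨v, -, hPv⟩ := exists_eq_span_singleton P
  have hmem := mem_pointsIn_iff hPv
  have hv0 : W.mkQ v ≠ 0 := by simpa [hmem] using hP
  refine ⟨Projectivization.mk F _ hv0, (hmem _).2 (Submodule.mem_span_singleton_self _),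
    fun y hy => Projectivization.submodule_injective ?_⟩
  refine (Submodule.eq_of_le_of_finrank_eq ?_ ?_).symm
  · exact (Submodule.span_singleton_le_iff_mem _ _).2 ((hmem _).1 hy)
  · rw [Projectivization.finrank_submodule, Projectivization.finrank_submodule]

lemma finrank_comap_mkQ {W : Submodule F (Fin n → F)} (y : ℙ F ((Fin n → F) ⧸ W)) :
    Module.finrank F (y.submodule.comap W.mkQ) = Module.finrank F W + 1 := by
  obtain ⟨v, hv⟩ := W.mkQ_surjective y.rep
  have hvW : v ∉ W := by
    rw [← Submodule.Quotient.mk_eq_zero, ← Submodule.mkQ_apply, hv]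
    exact y.rep_nonzero
  rw [Projectivization.submodule_eq, ← hv, ← Set.image_singleton, ← Submodule.map_span,
    Submodule.comap_map_mkQ, Submodule.finrank_sup_span_singleton hvW]

end Quotient

section Counting

variable {F : Type} [Field F] {n : ℕ}

noncomputable instance [Finite F] : Fintype (ProjPoint F n) :=
  have : Finite (ProjPoint F n) := by
    unfold ProjPoint
    infer_instance
  Fintype.ofFinite _

lemma exists_secant_lt [Finite F] {V : Set (ProjPoint F n)} {W : Submodule F (Fin n → F)} {k : ℕ}
    (hV : V.ncard < Nat.card (ℙ F ((Fin n → F) ⧸ W)) * k + secant F n V W) :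
    ∃ S, W ≤ S ∧ Module.finrank F S = Module.finrank F W + 1 ∧
      secant F n V S < k + secant F n V W := by
  have : Finite ((Fin n → F) ⧸ W) := Module.finite_of_finite F
  have : Fintype (ℙ F ((Fin n → F) ⧸ W)) := Fintype.ofFinite _
  have hcard : (V \ pointsIn F n W).ncard + secant F n V W = V.ncard :=
    add_comm _ (secant F n V W) ▸ Set.ncard_inter_add_ncard_sdiff_eq_ncard V _
  choose f _ huniq using fun P : (V \ pointsIn F n W : Set _) =>
    existsUnique_pointsIn_comap_mkQ P.2.2
  obtain ⟨y, -, hy⟩ := exists_card_fiber_lt_of_card_lt_mul (s := univ) (t := univ) (f := f) (n := k)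
    (by rw [card_univ, card_univ, ← Nat.card_eq_fintype_card, ← Nat.card_eq_fintype_card,
      Nat.card_coe_set_eq]; omega)
  refine ⟨_, W.le_comap_mkQ y.submodule, finrank_comap_mkQ y, ?_⟩
  have hsub : V ∩ pointsIn F n (y.submodule.comap W.mkQ) ⊆
      ((univ.filter fun P => f P = y).image Subtype.val : Finset _) ∪ (V ∩ pointsIn F n W) :=
    fun P ⟨hPV, hPy⟩ => or_iff_not_imp_right.2 fun hP => by
      have hPW : P ∉ pointsIn F n W := fun hPW => hP ⟨hPV, hPW⟩
      simpa using ⟨⟨hPV, hPW⟩, (huniq ⟨P, hPV, hPW⟩ y hPy).symm⟩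
  have hle := (Set.ncard_le_ncard hsub).trans (Set.ncard_union_le _ _)
  rw [Set.ncard_coe_finset] at hle
  exact hle.trans_lt (Nat.add_lt_add_right (card_image_le.trans_lt hy) _)

lemma sum_filter_charVec [Finite F] (p : ℕ) (V T : Set (ProjPoint F n)) :
    ∑ P with P ∈ T, charVec F p n V P = (V ∩ T).ncard := by
  simp only [charVec, Set.indicator_apply, Pi.one_apply]
  rw [sum_boole, filter_filter, ← Set.ncard_coe_finset, coe_filter]
  congr 2
  ext P
  simp [and_comm]

lemma sum_charVec [Finite F] (p : ℕ) (V : Set (ProjPoint F n)) :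
    ∑ P, charVec F p n V P = V.ncard := by
  simpa using sum_filter_charVec p V Set.univ

variable [Fintype F]

lemma ncard_pointsIn (S : Submodule F (Fin n → F)) :
    (pointsIn F n S).ncard = ∑ i ∈ range (Module.finrank F S), Fintype.card F ^ i := by
  rw [← Nat.card_eq_fintype_card, ← Projectivization.card_of_finrank F S rfl]
  conv_lhs => rw [← S.range_subtype, ← range_pointMap _ S.injective_subtype]
  exact Set.ncard_range_of_injective (pointMap_injective _ S.injective_subtype)

lemma ncard_pointsIn_cast {p : ℕ} (hF : p ∣ Fintype.card F) {S : Submodule F (Fin n → F)}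
    (hS : S ≠ ⊥) : ((pointsIn F n S).ncard : ZMod p) = 1 := by
  obtain ⟨d, hd⟩ := Nat.exists_eq_succ_of_ne_zero (mt Submodule.finrank_eq_zero.1 hS)
  rw [ncard_pointsIn, hd, sum_range_succ', Nat.cast_add, Nat.cast_sum]
  simp [pow_succ, (ZMod.natCast_eq_zero_iff _ _).2 hF]

lemma sum_filter_pointsIn_of_mem_hypCode {p : ℕ} (hF : p ∣ Fintype.card F)
    {c : ProjPoint F n → ZMod p} (hc : c ∈ hypCode F p n) {S : Submodule F (Fin n → F)}
    (hS : 2 ≤ Module.finrank F S) : ∑ P with P ∈ pointsIn F n S, c P = ∑ P, c P := by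
  have hn : 2 ≤ n := hS.trans (S.finrank_le.trans_eq (Module.finrank_fin_fun F))
  induction hc using Submodule.span_induction with
  | mem c hc =>
    obtain ⟨H, hH, rfl⟩ := hc
    have hH0 : H ≠ ⊥ := by
      rintro rfl
      rw [finrank_bot] at hH
      omega
    have hinf : H ⊓ S ≠ ⊥ := fun hbot => by
      have hsup := Submodule.finrank_sup_add_finrank_inf_eq H S
      have := (H ⊔ S).finrank_le
      rw [Module.finrank_fin_fun] at this
      rw [hbot, finrank_bot] at hsup
      omega
    rw [sum_filter_charVec, sum_charVec, ← pointsIn_inf, ncard_pointsIn_cast hF hinf,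
      ncard_pointsIn_cast hF hH0]
  | zero => simp
  | add c d _ _ hc hd => simp only [Pi.add_apply, sum_add_distrib, hc, hd]
  | smul a c _ hc => simp only [Pi.smul_apply, ← smul_sum, hc]

lemma secant_modEq_ncard {p : ℕ} (hF : p ∣ Fintype.card F) {V : Set (ProjPoint F n)}
    (hV : charVec F p n V ∈ hypCode F p n) {S : Submodule F (Fin n → F)}
    (hS : 2 ≤ Module.finrank F S) : secant F n V S ≡ V.ncard [MOD p] := by
  rw [← ZMod.natCast_eq_natCast_iff, secant, ← sum_filter_charVec, ← sum_charVec,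
    sum_filter_pointsIn_of_mem_hypCode hF hV hS]

end Counting

section Lines

variable {F : Type} [Field F] {q r : ℕ} {V : Set (ProjPoint F (r + 1))}

lemma ncard_modEq_one {p : ℕ} (hq : p ∣ q) (hr : r ≠ 0)
    (hV : (V.ncard : ℤ) * ((q : ℤ) ^ 2 - 1)
      = ((q : ℤ) ^ (r + 1) + (-1) ^ r) * ((q : ℤ) ^ r - (-1) ^ r)) : V.ncard ≡ 1 [MOD p] := by
  rw [← ZMod.natCast_eq_natCast_iff]
  have h := congrArg (Int.cast : ℤ → ZMod p) hV
  have hsq : (-1 : ZMod p) ^ r * (-1) ^ r = 1 := by rw [← mul_pow, neg_one_mul, neg_neg, one_pow]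
  push_cast [(ZMod.natCast_eq_zero_iff q p).2 hq] at h ⊢
  rw [zero_pow two_ne_zero, zero_pow r.succ_ne_zero, zero_pow hr] at h
  linear_combination hsq - h

lemma hermitian_size_lt {x ε : ℤ} (hx : 2 ≤ x) (hr : 2 ≤ r) (hε : ε = (-1) ^ r) :
    (x ^ (r + 1) + ε) * (x ^ r - ε)
      < ((x ^ 2) ^ (r - 1) - 1) * (x ^ 3 + 1) + (x ^ 2 - 1) := by
  obtain ⟨k, rfl⟩ := Nat.exists_eq_add_of_le hr
  set t := x ^ k
  have htop : x ^ (2 + k + 1) = x ^ 3 * t := by ring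
  have hmid : x ^ (2 + k) = x ^ 2 * t := by ring
  have hlow : (x ^ 2) ^ (2 + k - 1) = x ^ 2 * t ^ 2 := by
    rw [show 2 + k - 1 = k + 1 by omega]
    ring
  rw [htop, hmid, hlow]
  have : 0 < x ^ 2 := by positivity
  have ht1 : 1 ≤ t := one_le_pow₀ (by linarith)
  obtain ⟨-, rfl⟩ | ⟨hk, rfl⟩ : (Even k ∧ ε = 1) ∨ (Odd k ∧ ε = -1) := by
    obtain hk | hk := k.even_or_odd
    · exact .inl ⟨hk, by rw [hε, pow_add, hk.neg_one_pow]; rfl⟩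
    · exact .inr ⟨hk, by rw [hε, pow_add, hk.neg_one_pow]; rfl⟩
  · have : 0 ≤ x ^ 2 * (t - 1) * (t + x) := by
      have : 0 ≤ t - 1 := by linarith
      positivity
    nlinarith
  · have hxt : x ≤ t := le_self_pow₀ (by linarith) hk.pos.ne'
    have : 0 ≤ x ^ 2 * (t - x) * (t + 1) := by
      have : 0 ≤ t - x := by linarith
      positivity
    nlinarith

lemma exists_plane_secant_le [Fintype F] (hF : Fintype.card F = q ^ 2) (hq : 2 ≤ q) (hr : 2 ≤ r)
    (hV : (V.ncard : ℤ) * ((q : ℤ) ^ 2 - 1)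
      = ((q : ℤ) ^ (r + 1) + (-1) ^ r) * ((q : ℤ) ^ r - (-1) ^ r))
    {ℓ : Submodule F (Fin (r + 1) → F)} (hℓ : Module.finrank F ℓ = 2)
    (hpos : 1 ≤ secant F (r + 1) V ℓ) :
    ∃ α, ℓ ≤ α ∧ Module.finrank F α = 3 ∧
      secant F (r + 1) V α ≤ q ^ 3 + secant F (r + 1) V ℓ := by
  suffices hcount : V.ncard < Nat.card (ℙ F ((Fin (r + 1) → F) ⧸ ℓ)) * (q ^ 3 + 1)
      + secant F (r + 1) V ℓ by
    obtain ⟨α, hle, hα, hlt⟩ := exists_secant_lt hcount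
    exact ⟨α, hle, by rw [hα, hℓ], by omega⟩
  have hquot : Module.finrank F ((Fin (r + 1) → F) ⧸ ℓ) = r - 1 := by
    have := ℓ.finrank_quotient_add_finrank
    rw [hℓ, Module.finrank_fin_fun] at this
    omega
  have hplanes : (Nat.card (ℙ F ((Fin (r + 1) → F) ⧸ ℓ)) : ℤ) * ((q : ℤ) ^ 2 - 1)
      = ((q : ℤ) ^ 2) ^ (r - 1) - 1 := by
    rw [Projectivization.card_of_finrank F _ hquot, Nat.card_eq_fintype_card, hF]
    push_cast
    exact geom_sum_mul _ _
  have hsize := hermitian_size_lt (x := q) (by exact_mod_cast hq) hr rfl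
  rw [← hV, ← hplanes] at hsize
  zify at hq hpos ⊢
  have hq2 : 0 < (q : ℤ) ^ 2 - 1 := by nlinarith
  refine lt_of_mul_lt_mul_right ?_ hq2.le
  nlinarith

end Lines

section PlaneSection

lemma exists_ker_eq_of_finrank_add_one_eq {K M : Type*} [Field K] [AddCommGroup M] [Module K M]
    [FiniteDimensional K M] {H : Submodule K M} (hH : finrank K H + 1 = finrank K M) :
    ∃ f : Dual K M, f ≠ 0 ∧ LinearMap.ker f = H := by
  have hlt : H < ⊤ := Submodule.lt_top_of_finrank_lt_finrank (by omega)
  obtain ⟨f, hf, hle⟩ := H.exists_le_ker_of_lt_top hlt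
  have := Dual.finrank_ker_add_one_of_ne_zero hf
  exact ⟨f, hf, (Submodule.eq_of_le_of_finrank_eq hle (by omega)).symm⟩

lemma exists_range_eq_of_finrank_eq {K M : Type*} [Field K] [AddCommGroup M] [Module K M]
    [FiniteDimensional K M] {m : ℕ} {S : Submodule K M} (hS : finrank K S = m) :
    ∃ e : (Fin m → K) →ₗ[K] M, Function.Injective e ∧ LinearMap.range e = S := by
  let g : (Fin m → K) ≃ₗ[K] S := LinearEquiv.ofFinrankEq _ _ (by rw [finrank_fin_fun, hS])
  exact ⟨S.subtype ∘ₗ g, S.injective_subtype.comp g.injective,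
    by rw [LinearMap.range_comp_of_range_eq_top _ g.range, S.range_subtype]⟩

variable {F : Type} [Field F] {n : ℕ} (e : (Fin 3 → F) →ₗ[F] (Fin n → F))

/-- The line with dual coordinates `w` of the plane `range e` coordinatized by `e`. -/
noncomputable def planeLine (w : Plane F) : Submodule F (Fin n → F) :=
  (LinearMap.ker (dotProductEquiv F (Fin 3) w.rep)).map e

lemma planeLine_le_range (w : Plane F) : planeLine e w ≤ LinearMap.range e :=
  LinearMap.map_le_range

lemma apply_mem_planeLine_iff (he : Function.Injective e) (w : Plane F) (y : Fin 3 → F) :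
    e y ∈ planeLine e w ↔ w.rep ⬝ᵥ y = 0 :=
  he.mem_set_image

lemma finrank_planeLine (he : Function.Injective e) (w : Plane F) :
    finrank F (planeLine e w) = 2 := by
  have hw : dotProductEquiv F (Fin 3) w.rep ≠ 0 :=
    (LinearEquiv.map_ne_zero_iff _).2 w.rep_nonzero
  have := Dual.finrank_ker_add_one_of_ne_zero hw
  rw [finrank_fin_fun] at this
  rw [planeLine, ← (Submodule.equivMapOfInjective e he _).finrank_eq]
  omega

lemma exists_planeLine_eq (he : Function.Injective e) {ℓ : Submodule F (Fin n → F)}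
    (hle : ℓ ≤ LinearMap.range e) (hℓ : finrank F ℓ = 2) : ∃ w, planeLine e w = ℓ := by
  have hmap : (ℓ.comap e).map e = ℓ := Submodule.map_comap_eq_of_le hle
  obtain ⟨f, hf, hker⟩ := exists_ker_eq_of_finrank_add_one_eq (H := ℓ.comap e) (by
    rw [(Submodule.equivMapOfInjective e he _).finrank_eq, hmap, hℓ, finrank_fin_fun])
  obtain ⟨m, rfl⟩ := (dotProductEquiv F (Fin 3)).surjective f
  have hm : m ≠ 0 := (LinearEquiv.map_ne_zero_iff _).1 hf
  refine ⟨point m, ?_⟩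
  rw [← hmap, ← hker, planeLine]
  congr 1
  ext y
  by_cases hy : y = 0
  · simp [hy]
  · exact (point_mem_iff hy _).symm.trans (point_mem_point_iff hy hm)

variable (he : Function.Injective e)

lemma coe_pointMap_point {v : Fin 3 → F} (hv : v ≠ 0) :
    (pointMap e he (point v)).1 = Submodule.span F {e v} := by
  rw [point_of_ne_zero hv, coe_pointMap_mk]

lemma pointMap_mem_planeLine (R w : Plane F) :
    pointMap e he R ∈ pointsIn F n (planeLine e w) ↔ R ∈ w := by
  rw [pointMap_mem_pointsIn, apply_mem_planeLine_iff e he, mem_iff_rep]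

lemma comp_pointMap_mem_planeCode [Finite F] {p : ℕ} [CharP F p] {c : ProjPoint F n → ZMod p}
    (hc : c ∈ hypCode F p n) : c ∘ pointMap e he ∈ planeCode p F := by
  have hn : 3 ≤ n := by simpa using LinearMap.finrank_le_finrank_of_injective he
  induction hc using Submodule.span_induction with
  | mem c hc =>
    obtain ⟨H, hH, rfl⟩ := hc
    obtain ⟨f, -, rfl⟩ := exists_ker_eq_of_finrank_add_one_eq (H := H) (by
      rw [hH, finrank_fin_fun]; omega)
    obtain ⟨m, hm⟩ := (dotProductEquiv F (Fin 3)).surjective (f ∘ₗ e)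
    have hmem (R : Plane F) :
        pointMap e he R ∈ pointsIn F n (LinearMap.ker f) ↔ m ⬝ᵥ R.rep = 0 := by
      rw [pointMap_mem_pointsIn, ← dotProductEquiv_apply_apply, hm]
      rfl
    by_cases hm0 : m = 0
    · convert one_mem_planeCode (p := p) (F := F)
      ext R
      exact Set.indicator_of_mem ((hmem R).2 (by rw [hm0, zero_dotProduct])) _
    · refine Submodule.subset_span ⟨point m, ?_⟩
      ext R
      have hR : R ∈ point m ↔ pointMap e he R ∈ pointsIn F n (LinearMap.ker f) := by
        rw [hmem, ← point_mem_point_iff R.rep_nonzero hm0, point_rep]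
      simp only [setVec, charVec, Function.comp_apply, Set.indicator_apply, Set.mem_ofPred_eq, hR,
        Pi.one_apply]
  | zero => exact zero_mem _
  | add c d _ _ hc hd => exact add_mem hc hd
  | smul a c _ hc => exact Submodule.smul_mem _ a hc

variable [Fintype F]

/-- The section of `V` by the plane `range e`, in the coordinates given by `e`. -/
noncomputable def pullback (V : Set (ProjPoint F n)) : Finset (Plane F) :=
  {R | pointMap e he R ∈ V}

variable {e he} {V : Set (ProjPoint F n)}

lemma mem_pullback {R : Plane F} : R ∈ pullback e he V ↔ pointMap e he R ∈ V := by
  rw [pullback, mem_filter_univ]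

variable (e he)

lemma setVec_pullback_mem_planeCode {p : ℕ} [CharP F p]
    (hV : charVec F p n V ∈ hypCode F p n) :
    setVec p (pullback e he V : Set (Plane F)) ∈ planeCode p F := by
  convert comp_pointMap_mem_planeCode e he hV
  ext R
  simp only [setVec, charVec, Function.comp_apply, Set.indicator_apply, mem_coe, mem_pullback,
    Pi.one_apply]

lemma card_pullback : #(pullback e he V) = secant F n V (LinearMap.range e) := by
  rw [secant_eq_ncard_preimage e he V le_rfl, ← Set.ncard_coe_finset]
  congr 1
  ext R
  simp [mem_pullback, pointMap_mem_pointsIn]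

lemma lineCard_pullback (w : Plane F) :
    lineCard (pullback e he V) w = secant F n V (planeLine e w) := by
  rw [secant_eq_ncard_preimage e he V (planeLine_le_range e w), lineCard, ← Set.ncard_coe_finset]
  congr 1
  ext R
  simp [mem_pullback, pointMap_mem_planeLine]

lemma pullback_ne_univ (hV : ¬ pointsIn F n (LinearMap.range e) ⊆ V) :
    pullback e he V ≠ univ := fun h => hV <| by
  rw [← range_pointMap e he]
  exact Set.range_subset_iff.2 fun R => mem_pullback.1 (h ▸ mem_univ R)

end PlaneSection

section PlanarCodewords

variable {F : Type*} [Field F] [Fintype F] {p q : ℕ} [CharP F p] [Fact p.Prime]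
  {U : Finset (Plane F)}

lemma exists_isUnitalCodeword (hF : Fintype.card F = q ^ 2) (hq : 3 ≤ q)
    (hU : setVec p (U : Set (Plane F)) ∈ planeCode p F) (hpos : ∀ l : Plane F, 1 ≤ lineCard U l)
    (hle : ∀ l : Plane F, lineCard U l ≤ q + 1) : ∃ φ, IsUnitalCodeword q U φ := by
  have hord : order (Plane F) (Plane F) = q ^ 2 := order_plane.trans hF
  have hne : U.Nonempty := by
    obtain ⟨R, hR⟩ := card_pos.1 (hpos (point 1))
    exact ⟨R, (mem_filter.1 hR).1⟩
  obtain ⟨φ, hφ, hval⟩ := exists_mem_hyperplaneSpan hU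
  refine ⟨φ, hF, hq, isUnital_of_card_le hord (by omega)
    (isLineBounded_planeCode.cube_add_one_le_card hord hq hU hne hle) hpos hle, hφ, fun v hv => ?_⟩
  rw [hval v hv, setVec, Set.indicator_apply]
  split_ifs <;> simp_all

lemma hermitian_or_pencil_of_mem_planeCode (hF : Fintype.card F = q ^ 2) (hq : q = p ^ 2)
    (hp : p ≠ 2) (hU : setVec p (U : Set (Plane F)) ∈ planeCode p F) (hne : U ≠ univ)
    (hpos : ∀ l : Plane F, 1 ≤ lineCard U l)
    (hline : ∀ l : Plane F, lineCard U l ≤ q + 1 ∨ lineCard U l = q ^ 2 + 1) :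
    (∃ g : (Fin 3 → F) →ₗ[F] (Fin 3 → F), Function.Injective g ∧
      ∃ A : Matrix (Fin 3) (Fin 3) F, IsUnit A.det ∧ Aᵀ = A.map (· ^ q) ∧
        ∀ y, y ≠ 0 → (point (g y) ∈ U ↔ ∑ i, ∑ j, y i * A i j * y j ^ q = 0)) ∨
    ∃ A : Finset (Plane F), A.Nonempty ∧ #A ≤ q + 1 ∧ (∃ R : Plane F, ∀ l ∈ A, R ∈ l) ∧
      ∀ T, T ∈ U ↔ ∃ l ∈ A, T ∈ l := by
  have hord : order (Plane F) (Plane F) = q ^ 2 := order_plane.trans hF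
  have hq9 : 9 ≤ q := hq ▸ nine_le_sq hp
  let A : Finset (Plane F) := {l | lineCard U l = q ^ 2 + 1}
  have hA : ∀ l ∈ A, lineCard U l = q ^ 2 + 1 := fun l hl => (mem_filter.1 hl).2
  have hA' : ∀ l ∉ A, lineCard U l ≤ q + 1 := fun l hl =>
    (hline l).resolve_right fun h => hl (mem_filter.2 ⟨mem_univ l, h⟩)
  obtain hempty | hnonempty := A.eq_empty_or_nonempty
  · obtain ⟨φ, hφ⟩ := exists_isUnitalCodeword hF (by omega) hU hpos
      fun l => hA' l (hempty ▸ notMem_empty l)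
    exact .inl hφ.exists_hermitian
  · obtain ⟨R, hR⟩ : ∃ R, R ∉ U := by simpa [eq_univ_iff_forall] using hne
    have hcard : #U ≤ (q + 1) * (q ^ 2 + 1) := card_le_of_lineCard_le hord hR fun l hRl =>
      hA' l fun hl => hR (mem_of_lineCard_eq (hord ▸ hA l hl) hRl)
    exact .inr ⟨A, hnonempty, isLineBounded_planeCode.eq_pencil hord hq hp hU hcard hA hA'
      hnonempty⟩

end PlanarCodewords

section Transfer

variable {F : Type} [Field F] [Fintype F] {n q : ℕ} {e : (Fin 3 → F) →ₗ[F] (Fin n → F)}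
  {he : Function.Injective e} {V : Set (ProjPoint F n)}

lemma isClassicalUnital_of_pullback {g : (Fin 3 → F) →ₗ[F] (Fin 3 → F)}
    (hg : Function.Injective g) {A : Matrix (Fin 3) (Fin 3) F} (hA : IsUnit A.det)
    (hA' : Aᵀ = A.map (· ^ q)) (hU : ∀ y, y ≠ 0 →
      (point (g y) ∈ pullback e he V ↔ ∑ i, ∑ j, y i * A i j * y j ^ q = 0)) :
    IsClassicalUnital F q n (LinearMap.range e) (V ∩ pointsIn F n (LinearMap.range e)) := by
  have hsurj := LinearMap.injective_iff_surjective.1 hg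
  have hg0 {y : Fin 3 → F} (hy : y ≠ 0) : g y ≠ 0 := (map_ne_zero_iff g hg).2 hy
  refine ⟨e ∘ₗ g, LinearMap.ker_eq_bot.2 (he.comp hg),
    LinearMap.range_comp_of_range_eq_top _ (LinearMap.range_eq_top.2 hsurj), A, hA, hA', ?_⟩
  rw [← range_pointMap e he]
  ext P
  constructor
  · rintro ⟨hPV, R, rfl⟩
    obtain ⟨y, hy⟩ := hsurj R.rep
    have hy0 : y ≠ 0 := by
      rintro rfl
      exact R.rep_nonzero (hy ▸ map_zero g)
    have hR : point (g y) = R := by rw [hy, point_rep]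
    exact ⟨y, hy0, hR ▸ coe_pointMap_point e he (hg0 hy0), (hU y hy0).1 (hR ▸ mem_pullback.2 hPV)⟩
  · rintro ⟨y, hy0, hP, hsum⟩
    obtain rfl : pointMap e he (point (g y)) = P :=
      Subtype.ext ((coe_pointMap_point e he (hg0 hy0)).trans hP.symm)
    exact ⟨mem_pullback.1 ((hU y hy0).2 hsum), Set.mem_range_self _⟩

lemma inter_pointsIn_eq_iUnion_of_pullback {A : Finset (Plane F)}
    (hU : ∀ T, T ∈ pullback e he V ↔ ∃ w ∈ A, T ∈ w) :
    V ∩ pointsIn F n (LinearMap.range e) = ⋃ w ∈ A, pointsIn F n (planeLine e w) := by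
  have hmem (T : Plane F) : pointMap e he T ∈ V ↔
      pointMap e he T ∈ ⋃ w ∈ A, pointsIn F n (planeLine e w) := by
    rw [← mem_pullback, hU]
    simp only [Set.mem_iUnion₂, pointMap_mem_planeLine, exists_prop]
  have hsub : ⋃ w ∈ A, pointsIn F n (planeLine e w) ⊆ Set.range (pointMap e he) := by
    rw [range_pointMap]
    exact Set.iUnion₂_subset fun w _ P hP => le_trans hP (planeLine_le_range e w)
  rw [← range_pointMap e he]
  ext P
  constructor
  · rintro ⟨hPV, T, rfl⟩
    exact (hmem T).1 hPV
  · intro hP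
    obtain ⟨T, rfl⟩ := hsub hP
    exact ⟨(hmem T).2 hP, T, rfl⟩

lemma exists_concurrent_lines_of_pullback {A : Finset (Plane F)} (hne : A.Nonempty)
    (hcard : #A ≤ q + 1) {R : Plane F} (hR : ∀ w ∈ A, R ∈ w)
    (hU : ∀ T, T ∈ pullback e he V ↔ ∃ w ∈ A, T ∈ w) :
    ∃ i : ℕ, 1 ≤ i ∧ i ≤ q + 1 ∧ ∃ L : Finset (Submodule F (Fin n → F)), #L = i ∧
      (∀ ℓ ∈ L, ℓ ≤ LinearMap.range e ∧ finrank F ℓ = 2) ∧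
      (∃ P : ProjPoint F n, ∀ ℓ ∈ L, P.1 ≤ ℓ) ∧
      V ∩ pointsIn F n (LinearMap.range e) = ⋃ ℓ ∈ L, pointsIn F n ℓ := by
  refine ⟨_, card_pos.2 (hne.image (planeLine e)), card_image_le.trans hcard, _, rfl, ?_,
    ⟨pointMap e he R, ?_⟩, ?_⟩
  · exact forall_mem_image.2 fun w _ => ⟨planeLine_le_range e w, finrank_planeLine e he w⟩
  · exact forall_mem_image.2 fun w hw => (pointMap_mem_planeLine e he R w).2 (hR w hw)
  · rw [set_biUnion_finset_image, inter_pointsIn_eq_iUnion_of_pullback hU]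

end Transfer

section LineSections

lemma one_le_of_modEq_one {m p : ℕ} (hp : p ≠ 1) (hm : m ≡ 1 [MOD p]) : 1 ≤ m :=
  Nat.one_le_iff_ne_zero.2 fun h =>
    hp (Nat.dvd_one.1 ((Nat.modEq_zero_iff_dvd).1 (h ▸ hm).symm))

variable {F : Type} [Field F] [Fintype F] {p q r : ℕ} {V : Set (ProjPoint F (r + 1))}

lemma secant_modEq_one (hF : Fintype.card F = q ^ 2) (hq : p ∣ q) (hr : r ≠ 0)
    (hV : (V.ncard : ℤ) * ((q : ℤ) ^ 2 - 1)
      = ((q : ℤ) ^ (r + 1) + (-1) ^ r) * ((q : ℤ) ^ r - (-1) ^ r))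
    (hcode : charVec F p (r + 1) V ∈ hypCode F p (r + 1)) {S : Submodule F (Fin (r + 1) → F)}
    (hS : 2 ≤ finrank F S) : secant F (r + 1) V S ≡ 1 [MOD p] :=
  (secant_modEq_ncard (hF ▸ dvd_pow hq two_ne_zero) hcode hS).trans (ncard_modEq_one hq hr hV)

variable [CharP F p] [Fact p.Prime]

/-- A plane through `ℓ` of below average size brings the theory of small planar codewords to
bear on the line `ℓ`. -/
lemma secant_le_or_add_eq (hF : Fintype.card F = q ^ 2) (hq : q = p ^ 2) (hp : p ≠ 2) (hr : 2 ≤ r)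
    (hV : (V.ncard : ℤ) * ((q : ℤ) ^ 2 - 1)
      = ((q : ℤ) ^ (r + 1) + (-1) ^ r) * ((q : ℤ) ^ r - (-1) ^ r))
    (hcode : charVec F p (r + 1) V ∈ hypCode F p (r + 1)) {ℓ : Submodule F (Fin (r + 1) → F)}
    (hℓ : finrank F ℓ = 2) (hle : secant F (r + 1) V ℓ ≤ q ^ 2) :
    secant F (r + 1) V ℓ ≤ q + 1 ∨ secant F (r + 1) V ℓ + p = q ^ 2 + 1 := by
  have hpq : p ∣ q := hq ▸ dvd_pow_self p two_ne_zero
  have hq9 : 9 ≤ q := hq ▸ nine_le_sq hp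
  have hmod {S : Submodule F (Fin (r + 1) → F)} (hS : finrank F S = 2) :=
    secant_modEq_one hF hpq (by omega) hV hcode hS.ge
  have hpos := one_le_of_modEq_one (Fact.out : p.Prime).ne_one (hmod hℓ)
  obtain ⟨α, hℓα, hα, hcard⟩ := exists_plane_secant_le hF (by omega) hr hV hℓ hpos
  obtain ⟨e, he, rfl⟩ := exists_range_eq_of_finrank_eq hα
  obtain ⟨w, rfl⟩ := exists_planeLine_eq e he hℓα hℓ
  rw [← lineCard_pullback e he] at hle hcard ⊢
  rw [← card_pullback e he] at hcard
  refine isLineBounded_planeCode.lineCard_le_or_eq_of_card_le (order_plane.trans hF) hq hp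
    (setVec_pullback_mem_planeCode e he hcode) (fun l => ?_) hle hcard
  exact lineCard_pullback e he l ▸ hmod (finrank_planeLine e he l)

lemma lineCard_pullback_le_or_eq (hF : Fintype.card F = q ^ 2) (hq : q = p ^ 2) (hp : p ≠ 2)
    (hr : 2 ≤ r)
    (hV : (V.ncard : ℤ) * ((q : ℤ) ^ 2 - 1)
      = ((q : ℤ) ^ (r + 1) + (-1) ^ r) * ((q : ℤ) ^ r - (-1) ^ r))
    (hcode : charVec F p (r + 1) V ∈ hypCode F p (r + 1))
    (e : (Fin 3 → F) →ₗ[F] (Fin (r + 1) → F)) (he : Function.Injective e)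
    (hnosec : ∀ ℓ ≤ LinearMap.range e, finrank F ℓ = 2 → secant F (r + 1) V ℓ + p ≠ q ^ 2 + 1)
    (w : Plane F) :
    lineCard (pullback e he V) w ≤ q + 1 ∨ lineCard (pullback e he V) w = q ^ 2 + 1 := by
  have hmax : lineCard (pullback e he V) w ≤ q ^ 2 + 1 := by
    simpa only [order_plane, hF] using lineCard_le (pullback e he V) w
  have hw := finrank_planeLine e he w
  obtain hlt | hge := Nat.lt_or_ge (q ^ 2) (lineCard (pullback e he V) w)
  · exact .inr (le_antisymm hmax hlt)
  · rw [lineCard_pullback] at hge ⊢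
    exact .inl ((secant_le_or_add_eq hF hq hp hr hV hcode hw hge).resolve_right
      (hnosec _ (planeLine_le_range e w) hw))

end LineSections

end QuasiHermitian

open QuasiHermitian in
theorem stmt18_general (p r : ℕ) (hp : p.Prime) (hp2 : p ≠ 2)
    (F : Type) [Field F] [Fintype F] (hF : Fintype.card F = p ^ 4)
    (V : Set (ProjPoint F (r + 1)))
    (hV : (V.ncard : ℤ) * (((p ^ 2 : ℕ) : ℤ) ^ 2 - 1)
      = (((p ^ 2 : ℕ) : ℤ) ^ (r + 1) + (-1) ^ r) * (((p ^ 2 : ℕ) : ℤ) ^ r - (-1) ^ r))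
    (hcode : charVec F p (r + 1) V ∈ hypCode F p (r + 1))
    (π : Submodule F (Fin (r + 1) → F)) (hπ : finrank F π = 3)
    (hnot : ¬ pointsIn F (r + 1) π ⊆ V)
    (hnosec : ∀ ℓ : Submodule F (Fin (r + 1) → F), ℓ ≤ π → finrank F ℓ = 2 →
      secant F (r + 1) V ℓ ≠ p ^ 4 - p + 1) :
    IsClassicalUnital F (p ^ 2) (r + 1) π (V ∩ pointsIn F (r + 1) π) ∨
    (∃ i : ℕ, 1 ≤ i ∧ i ≤ p ^ 2 + 1 ∧
      ∃ L : Finset (Submodule F (Fin (r + 1) → F)), L.card = i ∧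
        (∀ ℓ ∈ L, ℓ ≤ π ∧ finrank F ℓ = 2) ∧
        (∃ P : ProjPoint F (r + 1), ∀ ℓ ∈ L, P.1 ≤ ℓ) ∧
        V ∩ pointsIn F (r + 1) π = ⋃ ℓ ∈ L, pointsIn F (r + 1) ℓ) := by
  have : Fact p.Prime := ⟨hp⟩
  have : CharP F p := charP_of_card_eq_prime_pow hF
  have hF' : Fintype.card F = (p ^ 2) ^ 2 := by rw [hF, ← pow_mul]
  have hr : 2 ≤ r := by
    have := hπ ▸ π.finrank_le
    rw [finrank_fin_fun] at this
    omega
  obtain ⟨e, he, rfl⟩ := exists_range_eq_of_finrank_eq hπ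
  have hnosec' : ∀ ℓ ≤ LinearMap.range e, finrank F ℓ = 2 →
      secant F (r + 1) V ℓ + p ≠ (p ^ 2) ^ 2 + 1 := fun ℓ hle hℓ h => hnosec ℓ hle hℓ <| by
    have : p ≤ p ^ 4 := Nat.le_self_pow four_ne_zero p
    have : (p ^ 2) ^ 2 = p ^ 4 := (pow_mul p 2 2).symm
    omega
  have hpos (w : Plane F) : 1 ≤ lineCard (pullback e he V) w :=
    lineCard_pullback e he w ▸ one_le_of_modEq_one hp.ne_one (secant_modEq_one hF'
      (dvd_pow_self p two_ne_zero) (by omega) hV hcode (finrank_planeLine e he w).ge)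
  obtain ⟨g, hg, A, hA, hA', hU⟩ | ⟨A, hne, hcard, ⟨R, hR⟩, hU⟩ :=
    hermitian_or_pencil_of_mem_planeCode hF' rfl hp2 (setVec_pullback_mem_planeCode e he hcode)
      (pullback_ne_univ e he hnot) hpos
      (lineCard_pullback_le_or_eq hF' rfl hp2 hr hV hcode e he hnosec')
  · exact .inl (isClassicalUnital_of_pullback hg hA hA' hU)
  · exact .inr (exists_concurrent_lines_of_pullback hne hcard hR hU)

/-- in PG(r, p⁴) (so `q = p²`), if a plane `π` is not contained in `V`
and no line of `π` meets `π ∩ V` in exactly `p⁴ - p + 1` points, then `π ∩ V` is a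
classical unital of `π` or a union of `i` distinct concurrent lines of `π` with
`1 ≤ i ≤ p² + 1`. -/
theorem stmt18 (p r : ℕ) (hp : p.Prime) (hp3 : 3 < p) (hr : 4 ≤ r)
    (F : Type) [Field F] [Fintype F] (hF : Fintype.card F = p ^ 4)
    (V : Set (ProjPoint F (r + 1))) (hV : IsQuasiHermitian F (p ^ 2) r V)
    (hcode : charVec F p (r + 1) V ∈ hypCode F p (r + 1))
    (π : Submodule F (Fin (r + 1) → F)) (hπ : finrank F π = 3)
    (hnot : ¬ pointsIn F (r + 1) π ⊆ V)
    (hnosec : ∀ ℓ : Submodule F (Fin (r + 1) → F), ℓ ≤ π → finrank F ℓ = 2 →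
      secant F (r + 1) V ℓ ≠ p ^ 4 - p + 1) :
    IsClassicalUnital F (p ^ 2) (r + 1) π (V ∩ pointsIn F (r + 1) π) ∨
    (∃ i : ℕ, 1 ≤ i ∧ i ≤ p ^ 2 + 1 ∧
      ∃ L : Finset (Submodule F (Fin (r + 1) → F)), L.card = i ∧
        (∀ ℓ ∈ L, ℓ ≤ π ∧ finrank F ℓ = 2) ∧
        (∃ P : ProjPoint F (r + 1), ∀ ℓ ∈ L, P.1 ≤ ℓ) ∧
        V ∩ pointsIn F (r + 1) π = ⋃ ℓ ∈ L, pointsIn F (r + 1) ℓ) :=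
  stmt18_general p r hp (by omega) F hF V hV.1 hcode π hπ hnot hnosec
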